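/- arXiv:1208.3506 — 4 statements merged into one kernel-verified Lean document; each statement's English description precedes it below -/
import Mathlib

section
/- Let s and τ be positive integers and let φ : R → k^τ be a k-linear map such that φ(𝓜^s) = k^τ and φ(𝓜^{s+1}) = 0, where 𝓜 = (x₁,…,x_m) is the maximal ideal of R. Set I = {h ∈ R : φ(Rh) = 0}. Then R/I is an Artinian s-level local k-algebra of type τ. -/
/-- The maximal ideal `𝓜 = (x₁,…,x_m)` of the formal power series ring. -/
noncomputable def MM (k : Type) [Field k] (m : ℕ) : Ideal (MvPowerSeries (Fin m) k) :=
  Ideal.span (Set.range (MvPowerSeries.X : Fin m → MvPowerSeries (Fin m) k))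
/-- `A` (with distinguished maximal ideal `mA`) is `s`-level of type `τ`: the socle
degree is `s` (`mA^s ≠ 0`, `mA^(s+1) = 0`), `Soc(A) := (0 :_A mA) = mA^s` and
`dim_k Soc(A) = τ`. -/
def IsLevelOfType (k : Type) [Field k] (A : Type) [CommRing A] [Algebra k A]
    (mA : Ideal A) (s τ : ℕ) : Prop :=
  mA ^ s ≠ ⊥ ∧ mA ^ (s + 1) = ⊥ ∧
    (⊥ : Ideal A).colon mA = mA ^ s ∧
    Module.finrank k (((⊥ : Ideal A).colon mA).restrictScalars k) = τ

/-!
The ideal `I` is the largest ideal contained in `ker φ`, so `𝓜 ^ (s + 1) ≤ I`. As the residue field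
of `𝓜` is `k`, an element `h` lies in `I` as soon as `φ h = 0` and `φ (𝓜 h) = 0`; on `𝓜 ^ s` the
second condition is automatic. Hence `φ` identifies the image of `𝓜 ^ s` in `R ⧸ I` with `k ^ τ`.
If `𝓜 h ≤ I`, choose `g ∈ 𝓜 ^ s` with `φ g = φ h`: then `h - g ∈ I`, so the socle of `R ⧸ I` is no
larger than the image of `𝓜 ^ s`.
-/

section NilpotentMaximalIdeal

variable {A : Type*} [CommRing A] {𝔪 P : Ideal A} {n : ℕ}

theorem eq_of_isPrime_of_isMaximal_of_pow_eq_bot (hP : P.IsPrime) (hmax : 𝔪.IsMaximal)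
    (hpow : 𝔪 ^ n = ⊥) : P = 𝔪 :=
  (hmax.eq_of_le hP.ne_top (hP.le_of_pow_le (hpow.trans_le bot_le))).symm

theorem isLocalRing_of_isMaximal_of_pow_eq_bot (hmax : 𝔪.IsMaximal) (hpow : 𝔪 ^ n = ⊥) :
    IsLocalRing A :=
  .of_unique_max_ideal ⟨𝔪, hmax, fun _ hP ↦
    eq_of_isPrime_of_isMaximal_of_pow_eq_bot hP.isPrime hmax hpow⟩

theorem isArtinianRing_of_isMaximal_of_fg_of_pow_eq_bot (hmax : 𝔪.IsMaximal) (hfg : 𝔪.FG)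
    (hpow : 𝔪 ^ n = ⊥) : IsArtinianRing A := by
  have prime_eq {P : Ideal A} (hP : P.IsPrime) : P = 𝔪 :=
    eq_of_isPrime_of_isMaximal_of_pow_eq_bot hP hmax hpow
  rw [isArtinianRing_iff_isNoetherianRing_krullDimLE_zero]
  exact ⟨.of_prime fun P hP ↦ (prime_eq hP).symm ▸ hfg,
    .mk₀ fun P hP ↦ (prime_eq hP).symm ▸ hmax⟩

end NilpotentMaximalIdeal

section Quotient

variable {R : Type*} [CommRing R] {I J : Ideal R} {n : ℕ}

theorem map_mk_pow_eq_bot_iff : J.map (Ideal.Quotient.mk I) ^ n = ⊥ ↔ J ^ n ≤ I := by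
  rw [← Ideal.map_pow, Ideal.map_eq_bot_iff_le_ker, Ideal.mk_ker]

theorem isMaximal_map_mk_of_pow_le (hJ : J.IsMaximal) (hI : I ≠ ⊤) (hpow : J ^ n ≤ I) :
    (J.map (Ideal.Quotient.mk I)).IsMaximal := by
  have : Nontrivial (R ⧸ I) := Ideal.Quotient.nontrivial_iff.2 hI
  refine (Ideal.map_eq_top_or_isMaximal_of_surjective _ Ideal.Quotient.mk_surjective
    hJ).resolve_left fun htop ↦ ?_
  have hbot := map_mk_pow_eq_bot_iff.2 hpow
  rw [htop, Ideal.top_pow] at hbot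
  exact top_ne_bot hbot

theorem bot_colon_map_mk :
    (⊥ : Ideal (R ⧸ I)).colon (J.map (Ideal.Quotient.mk I)) =
      (I.colon J).map (Ideal.Quotient.mk I) := by
  have mk_mem_iff (h : R) :
      Ideal.Quotient.mk I h ∈ (⊥ : Ideal (R ⧸ I)).colon (J.map (Ideal.Quotient.mk I)) ↔
        h ∈ I.colon J := by
    simp only [Ideal.map, Ideal.colon_span, Submodule.mem_colon, Set.forall_mem_image,
      smul_eq_mul, ← map_mul, Ideal.mem_bot, Ideal.Quotient.eq_zero_iff_mem]
  rw [← Ideal.map_comap_of_surjective _ Ideal.Quotient.mk_surjective (Submodule.colon _ _)]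
  exact congrArg _ (Ideal.ext mk_mem_iff)

theorem restrictScalars_map_mk (k : Type*) [CommRing k] [Algebra k R] :
    (J.map (Ideal.Quotient.mk I)).restrictScalars k =
      (J.restrictScalars k).map (Ideal.Quotient.mkₐ k I).toLinearMap :=
  SetLike.ext fun _ ↦ Ideal.mem_map_iff_of_surjective _ Ideal.Quotient.mk_surjective

end Quotient

theorem finrank_map_eq_of_forall_eq_zero_iff {k M N N' : Type*} [Ring k]
    [AddCommGroup M] [Module k M] [AddCommGroup N] [Module k N] [AddCommGroup N'] [Module k N']
    {p : Submodule k M} {f : M →ₗ[k] N} {g : M →ₗ[k] N'}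
    (h : ∀ x ∈ p, f x = 0 ↔ g x = 0) :
    Module.finrank k (p.map f) = Module.finrank k (p.map g) := by
  have ker_eq : (f.domRestrict p).ker = (g.domRestrict p).ker :=
    Submodule.ext fun x ↦ h x x.2
  rw [← LinearMap.range_domRestrict, ← LinearMap.range_domRestrict]
  exact ((f.domRestrict p).quotKerEquivRange.symm ≪≫ₗ Submodule.quotEquivOfEq _ _ ker_eq ≪≫ₗ
    (g.domRestrict p).quotKerEquivRange).finrank_eq

section IdealCore

variable {k R V : Type*} [CommRing k] [CommRing R] [Algebra k R] [AddCommGroup V] [Module k V]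
  {φ : R →ₗ[k] V} {M : Ideal R} {s : ℕ} {h : R}

/-- The largest ideal contained in the kernel of a `k`-linear map `φ` out of a `k`-algebra `R`;
for `R = k⟦x₁,…,x_m⟧` it is the ideal `I = {h : φ(Rh) = 0}` of the theorem. -/
def idealCore (φ : R →ₗ[k] V) : Ideal R where
  carrier := {h | ∀ r, φ (r * h) = 0}
  zero_mem' r := by rw [mul_zero, map_zero]
  add_mem' ha hb r := by rw [mul_add, map_add, ha, hb, add_zero]
  smul_mem' c _ ha r := by rw [smul_eq_mul, ← mul_assoc, ha]

theorem mem_idealCore : h ∈ idealCore φ ↔ ∀ r, φ (r * h) = 0 := Iff.rfl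

theorem le_idealCore_iff {J : Ideal R} : J ≤ idealCore φ ↔ J.restrictScalars k ≤ φ.ker := by
  refine ⟨fun hJ x hx ↦ ?_, fun hJ x hx r ↦ hJ (J.mul_mem_left r hx)⟩
  simpa only [one_mul, LinearMap.mem_ker] using mem_idealCore.1 (hJ hx) 1

theorem apply_eq_zero_of_mem_idealCore (hh : h ∈ idealCore φ) : φ h = 0 :=
  le_idealCore_iff.1 le_rfl hh

theorem mem_idealCore_of_forall_mem (hM : Function.Surjective (algebraMap k (R ⧸ M)))
    (hφ : φ h = 0) (hφM : ∀ r ∈ M, φ (r * h) = 0) : h ∈ idealCore φ := by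
  intro r
  obtain ⟨c, hc⟩ := hM (Ideal.Quotient.mk M r)
  have sub_mem : r - algebraMap k R c ∈ M := Ideal.Quotient.eq.1 hc.symm
  calc φ (r * h) = φ ((r - algebraMap k R c) * h) + c • φ h := by
        rw [← map_smul, ← map_add, Algebra.smul_def, sub_mul, sub_add_cancel]
    _ = 0 := by rw [hφM _ sub_mem, hφ, smul_zero, add_zero]

theorem mem_idealCore_iff_of_mem_pow (hM : Function.Surjective (algebraMap k (R ⧸ M)))
    (hzero : M ^ (s + 1) ≤ idealCore φ) (hh : h ∈ M ^ s) : h ∈ idealCore φ ↔ φ h = 0 :=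
  ⟨apply_eq_zero_of_mem_idealCore, fun hφ ↦ mem_idealCore_of_forall_mem hM hφ fun _ hr ↦
    apply_eq_zero_of_mem_idealCore (hzero (pow_succ' M s ▸ Ideal.mul_mem_mul hr hh))⟩

theorem idealCore_colon_eq_pow_sup (hM : Function.Surjective (algebraMap k (R ⧸ M)))
    (hsur : ((M ^ s).restrictScalars k).map φ = ⊤) (hzero : M ^ (s + 1) ≤ idealCore φ) :
    (idealCore φ).colon M = M ^ s ⊔ idealCore φ := by
  have pow_le_colon : M ^ s ≤ (idealCore φ).colon M := fun g hg ↦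
    Submodule.mem_colon.2 fun r hr ↦ hzero (pow_succ M s ▸ Ideal.mul_mem_mul hg hr)
  refine le_antisymm (fun h hh ↦ ?_) (sup_le pow_le_colon Ideal.le_colon)
  obtain ⟨g, hg, hgh⟩ : φ h ∈ ((M ^ s).restrictScalars k).map φ := hsur ▸ Submodule.mem_top
  have sub_mem_colon : h - g ∈ (idealCore φ).colon M := sub_mem hh (pow_le_colon hg)
  have sub_mem_core : h - g ∈ idealCore φ := by
    refine mem_idealCore_of_forall_mem hM (by rw [map_sub, hgh, sub_self]) fun r hr ↦ ?_
    rw [mul_comm]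
    exact apply_eq_zero_of_mem_idealCore (Submodule.mem_colon.1 sub_mem_colon r hr)
  exact Submodule.mem_sup.2 ⟨g, hg, h - g, sub_mem_core, add_sub_cancel g h⟩

theorem bot_colon_map_mk_idealCore (hM : Function.Surjective (algebraMap k (R ⧸ M)))
    (hsur : ((M ^ s).restrictScalars k).map φ = ⊤) (hzero : M ^ (s + 1) ≤ idealCore φ) :
    (⊥ : Ideal (R ⧸ idealCore φ)).colon (M.map (Ideal.Quotient.mk (idealCore φ))) =
      M.map (Ideal.Quotient.mk (idealCore φ)) ^ s := by
  rw [bot_colon_map_mk, idealCore_colon_eq_pow_sup hM hsur hzero, Ideal.map_sup,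
    Ideal.map_quotient_self, sup_bot_eq, Ideal.map_pow]

theorem finrank_map_mk_idealCore_pow (hM : Function.Surjective (algebraMap k (R ⧸ M)))
    (hsur : ((M ^ s).restrictScalars k).map φ = ⊤) (hzero : M ^ (s + 1) ≤ idealCore φ) :
    Module.finrank k
      ((M.map (Ideal.Quotient.mk (idealCore φ)) ^ s).restrictScalars k) = Module.finrank k V := by
  rw [← Ideal.map_pow, restrictScalars_map_mk, ← finrank_top k V, ← hsur]
  exact finrank_map_eq_of_forall_eq_zero_iff fun h hh ↦
    Ideal.Quotient.eq_zero_iff_mem.trans (mem_idealCore_iff_of_mem_pow hM hzero hh)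

theorem not_pow_le_idealCore [Nontrivial V] (hsur : ((M ^ s).restrictScalars k).map φ = ⊤) :
    ¬ M ^ s ≤ idealCore φ := by
  rw [le_idealCore_iff, LinearMap.le_ker_iff_map, hsur]
  exact top_ne_bot

end IdealCore

section VariablesIdeal

variable {σ R : Type*} [CommRing R]

theorem mem_span_X_image_of_coeff_eq_zero (S : Finset σ) {f : MvPowerSeries σ R}
    (hf : ∀ n : σ →₀ ℕ, (∀ i ∈ S, n i = 0) → MvPowerSeries.coeff n f = 0) :
    f ∈ Ideal.span (MvPowerSeries.X '' (S : Set σ)) := by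
  classical
  induction S using Finset.induction_on generalizing f with
  | empty =>
    obtain rfl : f = 0 := MvPowerSeries.ext fun n ↦ hf n (by simp)
    exact zero_mem _
  | insert a S _ ih =>
    -- `g` collects the monomials of `f` that are not divisible by `X a`.
    obtain ⟨g, coeff_g⟩ : ∃ g : MvPowerSeries σ R, ∀ n, MvPowerSeries.coeff n g =
        if n a = 0 then MvPowerSeries.coeff n f else 0 := ⟨fun n ↦ _, fun _ ↦ rfl⟩
    have g_mem : g ∈ Ideal.span (MvPowerSeries.X '' (S : Set σ)) := by
      refine ih fun n hn ↦ ?_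
      rw [coeff_g]
      split_ifs with hna
      · exact hf n (Finset.forall_mem_insert _ _ _ |>.2 ⟨hna, hn⟩)
      · rfl
    have X_dvd_sub : MvPowerSeries.X a ∣ f - g := MvPowerSeries.X_dvd_iff.2 fun n hn ↦ by
      rw [map_sub, coeff_g, if_pos hn, sub_self]
    rw [Finset.coe_insert, Set.image_insert_eq, Ideal.span_insert]
    exact Submodule.mem_sup.2
      ⟨f - g, Ideal.mem_span_singleton.2 X_dvd_sub, g, g_mem, sub_add_cancel f g⟩

theorem span_range_X_eq_ker_constantCoeff [Finite σ] :
    Ideal.span (Set.range (MvPowerSeries.X : σ → MvPowerSeries σ R)) =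
      RingHom.ker (MvPowerSeries.constantCoeff (σ := σ) (R := R)) := by
  have := Fintype.ofFinite σ
  refine le_antisymm ?_ fun f hf ↦ ?_
  · rw [Ideal.span_le, Set.range_subset_iff]
    exact MvPowerSeries.constantCoeff_X
  · rw [← Set.image_univ, ← Finset.coe_univ]
    refine mem_span_X_image_of_coeff_eq_zero _ fun n hn ↦ ?_
    obtain rfl : n = 0 := Finsupp.ext fun i ↦ hn i (Finset.mem_univ i)
    exact hf

end VariablesIdeal

section MM

variable (k : Type) [Field k] (m : ℕ)

theorem MM_eq_ker_constantCoeff :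
    MM k m = RingHom.ker (MvPowerSeries.constantCoeff (σ := Fin m) (R := k)) :=
  span_range_X_eq_ker_constantCoeff

theorem isMaximal_MM : (MM k m).IsMaximal := by
  rw [MM_eq_ker_constantCoeff]
  exact RingHom.ker_isMaximal_of_surjective _ fun c ↦
    ⟨MvPowerSeries.C c, MvPowerSeries.constantCoeff_C c⟩

theorem fg_MM : (MM k m).FG := Submodule.fg_span (Set.finite_range _)

theorem surjective_algebraMap_quotient_MM :
    Function.Surjective (algebraMap k (MvPowerSeries (Fin m) k ⧸ MM k m)) := by
  refine Ideal.Quotient.mk_surjective.forall.2 fun f ↦ ⟨MvPowerSeries.constantCoeff f, ?_⟩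
  refine (Ideal.Quotient.eq (I := MM k m) (x := algebraMap k _ _)).2 ?_
  rw [MM_eq_ker_constantCoeff, RingHom.mem_ker, map_sub, MvPowerSeries.algebraMap_apply]
  simp

end MM

theorem level_algebra_from_linear_functional_general {k R V : Type} [Field k] [CommRing R]
    [Algebra k R] [AddCommGroup V] [Module k V] [Nontrivial V] {M : Ideal R} {s : ℕ}
    {φ : R →ₗ[k] V} (hmax : M.IsMaximal) (hfg : M.FG)
    (hres : Function.Surjective (algebraMap k (R ⧸ M)))
    (hsur : ((M ^ s).restrictScalars k).map φ = ⊤)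
    (hzero : ((M ^ (s + 1)).restrictScalars k).map φ = ⊥) :
    IsArtinianRing (R ⧸ idealCore φ) ∧
      IsLocalRing (R ⧸ idealCore φ) ∧
      (M.map (Ideal.Quotient.mk (idealCore φ))).IsMaximal ∧
      IsLevelOfType k (R ⧸ idealCore φ) (M.map (Ideal.Quotient.mk (idealCore φ))) s
        (Module.finrank k V) := by
  have pow_succ_le : M ^ (s + 1) ≤ idealCore φ :=
    le_idealCore_iff.2 (LinearMap.le_ker_iff_map.2 hzero)
  have pow_not_le : ¬ M ^ s ≤ idealCore φ := not_pow_le_idealCore hsur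
  have core_ne_top : idealCore φ ≠ ⊤ := fun htop ↦ pow_not_le (htop ▸ le_top)
  have map_isMaximal := isMaximal_map_mk_of_pow_le hmax core_ne_top pow_succ_le
  have map_pow_eq_bot := map_mk_pow_eq_bot_iff.2 pow_succ_le
  have socle_eq := bot_colon_map_mk_idealCore hres hsur pow_succ_le
  exact ⟨isArtinianRing_of_isMaximal_of_fg_of_pow_eq_bot map_isMaximal (hfg.map _) map_pow_eq_bot,
    isLocalRing_of_isMaximal_of_pow_eq_bot map_isMaximal map_pow_eq_bot, map_isMaximal,
    mt map_mk_pow_eq_bot_iff.1 pow_not_le, map_pow_eq_bot, socle_eq,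
    socle_eq ▸ finrank_map_mk_idealCore_pow hres hsur pow_succ_le⟩

/-- **Lemma (Iarrobino, recast).** Let `s, τ` be positive integers and
`φ : R → k^τ` a `k`-linear map with `φ(𝓜^s) = k^τ` and `φ(𝓜^(s+1)) = 0`, where
`𝓜 = (x₁,…,x_m)` is the maximal ideal of `R = k⟦x₁,…,x_m⟧`.
If `I = {h ∈ R : φ(Rh) = 0}`, then `R/I` is an Artinian `s`-level local `k`-algebra
of type `τ`. -/
theorem level_algebra_from_linear_functional
    (k : Type) [Field k] [IsAlgClosed k] [CharZero k] (m s τ : ℕ)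
    (hs : 0 < s) (hτ : 0 < τ)
    (φ : MvPowerSeries (Fin m) k →ₗ[k] (Fin τ → k))
    (hsur : Submodule.map φ (((MM k m) ^ s).restrictScalars k) = ⊤)
    (hzero : Submodule.map φ (((MM k m) ^ (s + 1)).restrictScalars k) = ⊥)
    (I : Ideal (MvPowerSeries (Fin m) k))
    (hI : (I : Set (MvPowerSeries (Fin m) k)) =
      {h | ∀ r : MvPowerSeries (Fin m) k, φ (r * h) = 0}) :
    IsArtinianRing (MvPowerSeries (Fin m) k ⧸ I) ∧
      IsLocalRing (MvPowerSeries (Fin m) k ⧸ I) ∧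
      ((MM k m).map (Ideal.Quotient.mk I)).IsMaximal ∧
      IsLevelOfType k (MvPowerSeries (Fin m) k ⧸ I)
        ((MM k m).map (Ideal.Quotient.mk I)) s τ := by
  obtain rfl : I = idealCore φ := SetLike.coe_injective hI
  have : Nonempty (Fin τ) := ⟨⟨0, hτ⟩⟩
  simpa only [Module.finrank_fin_fun] using level_algebra_from_linear_functional_general
    (isMaximal_MM k m) (fg_MM k m) (surjective_algebraMap_quotient_MM k m) hsur hzero
end

section
/- Let H = (1, m, τ) be a numerical sequence with m, τ positive integers. Then H is the h-vector of an Artinian 2-level local k-algebra if and only if τ ≤ C(m+1, 2) = m(m+1)/2. -/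
set_option synthInstance.maxHeartbeats 1000000
set_option maxHeartbeats 2000000

/-- The Hilbert function of a `k`-algebra `A` with respect to the ideal `mA`:
`HF_A(j) = dim_k (mA^j / mA^(j+1))`. -/
noncomputable def HF (k : Type) [Field k] (A : Type) [CommRing A] [Algebra k A]
    (mA : Ideal A) (j : ℕ) : ℕ :=
  Module.finrank k
    (((mA ^ j).restrictScalars k).map ((mA ^ (j + 1)).restrictScalars k).mkQ)
/-- An Artinian `s`-level local `k`-algebra of type `τ` (with residue field `k`). -/
structure ArtinianLevelLocalAlgebra (k : Type) [Field k] (s τ : ℕ) : Type 1 where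
  carrier : Type
  [commRing : CommRing carrier]
  [alg : Algebra k carrier]
  [loc : IsLocalRing carrier]
  artinian : IsArtinianRing carrier
  residue_surj : Function.Surjective
    (algebraMap k (carrier ⧸ IsLocalRing.maximalIdeal carrier))
  level : IsLevelOfType k carrier (IsLocalRing.maximalIdeal carrier) s τ

attribute [instance] ArtinianLevelLocalAlgebra.commRing ArtinianLevelLocalAlgebra.alg
  ArtinianLevelLocalAlgebra.loc

/-!
Lifts of a basis of `𝔪 / 𝔪²` have pairwise products that span `𝔪²` modulo `𝔪³`, and there are
`C(m + 1, 2)` unordered pairs of them; this bounds `τ`.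

Conversely, let `V = k^m` and let `U` be a subspace of codimension `τ` in `Sym² V`. The graded
algebra `k ⊕ V ⊕ Sym² V / U` is local with `𝔪² = Sym² V / U` and `𝔪³ = 0`, and it is level as soon
as no nonzero vector of `V` annihilates `V`. This is arranged by choosing `U` inside the kernel of
the linear form on `Sym² V` given by the dot product, which is nondegenerate.
-/

open Module (finrank)
open IsLocalRing (maximalIdeal)
open Submodule (span)

section UpperBound

variable {k : Type*} [Field k]

lemma exists_le_span_range_sup {M : Type*} [AddCommGroup M] [Module k M] (P Q : Submodule k M)
    [Module.Finite k (P.map Q.mkQ)] :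
    ∃ x : Fin (finrank k (P.map Q.mkQ)) → M, P ≤ span k (Set.range x) ⊔ Q := by
  let b := Module.finBasis k (P.map Q.mkQ)
  choose x hx using fun i => Q.mkQ_surjective (b i : M ⧸ Q)
  refine ⟨x, ?_⟩
  have map_span : (span k (Set.range x)).map Q.mkQ = P.map Q.mkQ := by
    have : Q.mkQ ∘ x = (P.map Q.mkQ).subtype ∘ b := funext hx
    rw [Submodule.map_span, ← Set.range_comp, this, Set.range_comp, ← Submodule.map_span,
      b.span_eq, Submodule.map_subtype_top]
  rw [sup_comm, ← Submodule.comap_map_mkQ, map_span]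
  exact Submodule.le_comap_map _ _

lemma finrank_span_range_sq_le {A ι : Type*} [CommRing A] [Algebra k A] [Fintype ι] (x : ι → A) :
    finrank k ↥(span k (Set.range x) ^ 2) ≤ (Fintype.card ι + 1).choose 2 := by
  let xx : Sym2 ι → A := Sym2.lift ⟨fun i j => x i * x j, fun i j => mul_comm _ _⟩
  have sq_eq : span k (Set.range x) ^ 2 = span k (Set.range xx) := by
    rw [pow_two, Submodule.span_mul_span]
    congr 1
    ext y
    simp [xx, Set.mem_mul, Sym2.exists]
  rw [sq_eq, ← Sym2.card]
  exact finrank_range_le_card xx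

lemma sq_le_sq_sup_cube {A : Type*} [CommRing A] [Algebra k A] {I : Ideal A} {S : Submodule k A}
    (h : I.restrictScalars k ≤ S ⊔ (I ^ 2).restrictScalars k) :
    (I ^ 2).restrictScalars k ≤ S ^ 2 ⊔ (I ^ 3).restrictScalars k := by
  rw [pow_two I, Submodule.restrictScalars_mul, Submodule.mul_le]
  intro p hp q hq
  obtain ⟨s, hs, p', hp', rfl⟩ := Submodule.mem_sup.1 (h hp)
  obtain ⟨t, ht, q', hq', rfl⟩ := Submodule.mem_sup.1 (h hq)
  have hsI : s ∈ I := (I.add_mem_iff_left (Ideal.pow_le_self two_ne_zero hp')).1 hp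
  have cross_terms_mem : p' * (t + q') + q' * s ∈ I ^ 3 :=
    pow_succ I 2 ▸ add_mem (Ideal.mul_mem_mul hp' hq) (Ideal.mul_mem_mul hq' hsI)
  refine Submodule.mem_sup.2 ⟨s * t, ?_, _, cross_terms_mem, by ring⟩
  exact pow_two S ▸ Submodule.mul_mem_mul hs ht

lemma HF_two_le_choose {k A : Type} [Field k] [CommRing A] [Algebra k A] (I : Ideal A)
    [Module.Finite k (((I ^ 1).restrictScalars k).map ((I ^ 2).restrictScalars k).mkQ)] :
    HF k A I 2 ≤ (HF k A I 1 + 1).choose 2 := by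
  obtain ⟨x, hx⟩ : ∃ x : Fin (HF k A I 1) → A,
      (I ^ 1).restrictScalars k ≤ span k (Set.range x) ⊔ (I ^ 2).restrictScalars k :=
    exists_le_span_range_sup ((I ^ 1).restrictScalars k) ((I ^ 2).restrictScalars k)
  rw [pow_one] at hx
  let S := span k (Set.range x)
  let π := ((I ^ 3).restrictScalars k).mkQ
  have : Module.Finite k ↥(S ^ 2) :=
    Module.Finite.iff_fg.2 ((Submodule.fg_span (Set.finite_range x)).pow 2)
  have map_le : ((I ^ 2).restrictScalars k).map π ≤ (S ^ 2).map π :=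
    (Submodule.map_mono (sq_le_sq_sup_cube hx)).trans_eq (by simp [π, S, Submodule.map_sup])
  calc HF k A I 2
    _ ≤ finrank k ↥((S ^ 2).map π) := Submodule.finrank_mono map_le
    _ ≤ finrank k ↥(S ^ 2) := Submodule.finrank_map_le _ _
    _ ≤ (HF k A I 1 + 1).choose 2 := by simpa using finrank_span_range_sq_le (k := k) x

lemma finite_of_algebraMap_residue_surjective {A : Type*} [CommRing A] [Algebra k A]
    [IsLocalRing A] [IsArtinianRing A]
    (h : Function.Surjective (algebraMap k (A ⧸ maximalIdeal A))) : Module.Finite k A := by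
  have : Module.Finite k (A ⧸ Ring.jacobson A) := by
    rw [IsLocalRing.ringJacobson_eq_maximalIdeal]
    exact Module.Finite.of_surjective (Algebra.linearMap k _) h
  exact IsSemiprimaryRing.finite_of_isArtinian k A A

end UpperBound

lemma exists_le_ker_finrank_quotient_eq {k E : Type*} [Field k] [AddCommGroup E] [Module k E]
    [Module.Finite k E] (φ : E →ₗ[k] k) {n : ℕ} (hn : 0 < n) (hnE : n ≤ finrank k E) :
    ∃ U ≤ LinearMap.ker φ, finrank k (E ⧸ U) = n := by
  have ker_large : finrank k E - n ≤ finrank k (LinearMap.ker φ) := by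
    have := φ.finrank_range_add_finrank_ker
    have : finrank k (LinearMap.range φ) ≤ 1 := by
      simpa using (LinearMap.range φ).finrank_le
    omega
  obtain ⟨u, hu⟩ := exists_linearIndependent_of_le_finrank ker_large
  refine ⟨(span k (Set.range u)).map (LinearMap.ker φ).subtype, Submodule.map_subtype_le _ _, ?_⟩
  have := ((span k (Set.range u)).map (LinearMap.ker φ).subtype).finrank_quotient_add_finrank
  rw [Submodule.finrank_map_subtype_eq, finrank_span_eq_card hu, Fintype.card_fin] at this
  omega

section Unitization

variable {k N : Type*} [Field k] [NonUnitalCommRing N] [Module k N] [IsScalarTower k N N]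
  [SMulCommClass k N N]

lemma isLocalRing_unitization (hN : ∀ n : N, IsNilpotent (n : Unitization k N)) :
    IsLocalRing (Unitization k N) := by
  have : IsLocalHom (Unitization.fstHom k N).toRingHom := by
    refine ⟨fun x hx => ?_⟩
    have isUnit_inl : IsUnit (Unitization.inl x.fst : Unitization k N) :=
      hx.map (Unitization.inlRingHom k N)
    rw [← Unitization.inl_fst_add_inr_snd_eq x]
    exact (hN x.snd).isUnit_add_left_of_commute isUnit_inl (.all _ _)
  exact RingHom.domain_isLocalRing (Unitization.fstHom k N).toRingHom

variable [IsLocalRing (Unitization k N)]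

lemma mem_maximalIdeal_unitization {x : Unitization k N} :
    x ∈ maximalIdeal (Unitization k N) ↔ x.fst = 0 := by
  have : (RingHom.ker (Unitization.fstHom k N)).IsMaximal :=
    RingHom.ker_isMaximal_of_surjective _ fun a => ⟨Unitization.inl a, rfl⟩
  rw [← IsLocalRing.eq_maximalIdeal this]
  rfl

lemma restrictScalars_maximalIdeal_unitization :
    (maximalIdeal (Unitization k N)).restrictScalars k =
      LinearMap.range (Unitization.inrHom k k N) := by
  ext x
  rw [Submodule.restrictScalars_mem, mem_maximalIdeal_unitization]
  exact ⟨fun hx => ⟨x.snd, Unitization.ext hx.symm rfl⟩, by rintro ⟨n, rfl⟩; rfl⟩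

lemma algebraMap_residue_unitization_surjective :
    Function.Surjective (algebraMap k (Unitization k N ⧸ maximalIdeal (Unitization k N))) := by
  intro q
  obtain ⟨x, rfl⟩ := Ideal.Quotient.mk_surjective q
  refine ⟨x.fst, Ideal.Quotient.eq.2 (mem_maximalIdeal_unitization.2 ?_)⟩
  exact sub_self x.fst

end Unitization

lemma finrank_map_mkQ_add_finrank {k M : Type*} [Field k] [AddCommGroup M] [Module k M]
    {P Q : Submodule k M} [Module.Finite k P] (h : Q ≤ P) :
    finrank k (P.map Q.mkQ) + finrank k Q = finrank k P := by
  rw [← (Submodule.comapSubtypeEquivOfLe h).finrank_eq,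
    ← (Q.mkQ.domRestrict P).finrank_range_add_finrank_ker, LinearMap.range_domRestrict,
    LinearMap.ker_domRestrict, Submodule.ker_mkQ]

lemma HF_add_finrank_pow_succ {k A : Type} [Field k] [CommRing A] [Algebra k A]
    [Module.Finite k A] (I : Ideal A) (j : ℕ) :
    HF k A I j + finrank k ((I ^ (j + 1)).restrictScalars k) =
      finrank k ((I ^ j).restrictScalars k) :=
  finrank_map_mkQ_add_finrank fun _ hx => Ideal.pow_le_pow_right j.le_succ hx

/-- A symmetric bilinear map `V × V → W`. It prescribes the products of two elements of degree one
in `SymmBilinMap.GradedAlgebra`. -/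
structure SymmBilinMap (R V W : Type*) [CommRing R] [AddCommGroup V] [Module R V]
    [AddCommGroup W] [Module R W] extends V →ₗ[R] V →ₗ[R] W where
  symm : ∀ v w, toLinearMap v w = toLinearMap w v

namespace SymmBilinMap

section CommRing

variable {R V W X : Type*} [CommRing R] [AddCommGroup V] [Module R V] [AddCommGroup W]
  [Module R W] [AddCommGroup X] [Module R X] (B : SymmBilinMap R V W)

/-- The symmetric bilinear map `f ∘ B`. -/
def postcomp (f : W →ₗ[R] X) : SymmBilinMap R V X where
  toLinearMap := B.toLinearMap.compr₂ f
  symm v w := congrArg f (B.symm v w)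

lemma map₂_postcomp (hB : Submodule.map₂ B.toLinearMap ⊤ ⊤ = ⊤) {f : W →ₗ[R] X}
    (hf : Function.Surjective f) : Submodule.map₂ (B.postcomp f).toLinearMap ⊤ ⊤ = ⊤ := by
  rw [postcomp, ← Submodule.map_map₂, hB, Submodule.map_top, LinearMap.range_eq_top.2 hf]

/-- The augmentation ideal `V ⊕ W` of `B.GradedAlgebra`, a non-unital ring with product
`(v₁, w₁) * (v₂, w₂) = (0, B v₁ v₂)`. It is a type synonym so as not to inherit the componentwise
product of `V × W`. -/
def AugIdeal (_ : SymmBilinMap R V W) : Type _ := V × W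

namespace AugIdeal

instance : AddCommGroup B.AugIdeal := inferInstanceAs (AddCommGroup (V × W))
instance : Module R B.AugIdeal := inferInstanceAs (Module R (V × W))

/-- The projection to the degree-one component. -/
def deg1 : B.AugIdeal →ₗ[R] V := LinearMap.fst R V W

/-- The inclusion of the degree-one component. -/
def ofDeg1 : V →ₗ[R] B.AugIdeal := LinearMap.inl R V W

/-- The inclusion of the degree-two component. -/
def ofDeg2 : W →ₗ[R] B.AugIdeal := LinearMap.inr R V W

@[simp] lemma deg1_ofDeg1 (v : V) : deg1 B (ofDeg1 B v) = v := rfl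
@[simp] lemma deg1_ofDeg2 (w : W) : deg1 B (ofDeg2 B w) = 0 := rfl

lemma ofDeg2_injective : Function.Injective (ofDeg2 B) := LinearMap.inr_injective

lemma ker_deg1 : LinearMap.ker (deg1 B) = LinearMap.range (ofDeg2 B) :=
  LinearMap.ker_fst R V W

variable {B}

instance : Mul B.AugIdeal := ⟨fun x y => ofDeg2 B (B.toLinearMap (deg1 B x) (deg1 B y))⟩

lemma mul_def (x y : B.AugIdeal) : x * y = ofDeg2 B (B.toLinearMap (deg1 B x) (deg1 B y)) := rfl

lemma mul_mul_eq_zero (x y z : B.AugIdeal) : x * y * z = 0 := by simp [mul_def]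

instance : NonUnitalCommRing B.AugIdeal where
  left_distrib x y z := by simp [mul_def]
  right_distrib x y z := by simp [mul_def]
  zero_mul x := by simp [mul_def]
  mul_zero x := by simp [mul_def]
  mul_assoc x y z := by simp [mul_def]
  mul_comm x y := by rw [mul_def, B.symm, mul_def]

instance : IsScalarTower R B.AugIdeal B.AugIdeal := ⟨fun r x y => by simp [mul_def]⟩
instance : SMulCommClass R B.AugIdeal B.AugIdeal := ⟨fun r x y => by simp [mul_def]⟩

end AugIdeal

/-- The graded algebra `R ⊕ V ⊕ W` whose only products in positive degree are those of two
elements of `V`, given by `B`. -/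
abbrev GradedAlgebra : Type _ := Unitization R B.AugIdeal

end CommRing

section Field

variable {k V W : Type*} [Field k] [AddCommGroup V] [Module k V]
  [AddCommGroup W] [Module k W] (B : SymmBilinMap k V W)

instance : IsLocalRing B.GradedAlgebra := isLocalRing_unitization fun n => ⟨3, by
  rw [pow_succ, pow_two, ← Unitization.inr_mul, ← Unitization.inr_mul, AugIdeal.mul_mul_eq_zero,
    Unitization.inr_zero]⟩

local notation "𝔪" => maximalIdeal (GradedAlgebra B)

/-- The inclusion of `W` as the degree-two part of `B.GradedAlgebra`; its image is the socle when
`B` is nondegenerate and its values span `W`. -/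
def socleInclusion : W →ₗ[k] B.GradedAlgebra :=
  Unitization.inrHom k k B.AugIdeal ∘ₗ AugIdeal.ofDeg2 B

variable {B}

lemma inr_mul_inr (x y : B.AugIdeal) : (x * y : B.GradedAlgebra) =
    B.socleInclusion (B.toLinearMap (AugIdeal.deg1 B x) (AugIdeal.deg1 B y)) :=
  (Unitization.inr_mul k x y).symm

lemma socleInclusion_injective : Function.Injective B.socleInclusion :=
  Unitization.inr_injective.comp (AugIdeal.ofDeg2_injective B)

lemma restrictScalars_maximalIdeal_sq :
    (𝔪 ^ 2).restrictScalars k = (Submodule.map₂ B.toLinearMap ⊤ ⊤).map B.socleInclusion := by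
  rw [Submodule.restrictScalars_pow two_ne_zero, restrictScalars_maximalIdeal_unitization,
    pow_two, Submodule.map_map₂]
  apply le_antisymm
  · rw [Submodule.mul_le]
    rintro _ ⟨x, rfl⟩ _ ⟨y, rfl⟩
    exact inr_mul_inr x y ▸ Submodule.apply_mem_map₂ (B.toLinearMap.compr₂ B.socleInclusion)
      (Submodule.mem_top (x := AugIdeal.deg1 B x)) (Submodule.mem_top (x := AugIdeal.deg1 B y))
  · rw [Submodule.map₂_le]
    intro v _ w _
    have := inr_mul_inr (B := B) (AugIdeal.ofDeg1 B v) (AugIdeal.ofDeg1 B w)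
    exact this ▸ Submodule.mul_mem_mul ⟨_, rfl⟩ ⟨_, rfl⟩

lemma socleInclusion_mul_eq_zero (w : W) {x : B.GradedAlgebra} (hx : x ∈ 𝔪) :
    B.socleInclusion w * x = 0 := by
  lift x to B.AugIdeal using mem_maximalIdeal_unitization.1 hx
  exact (inr_mul_inr _ x).trans (by simp)

lemma maximalIdeal_cube : 𝔪 ^ 3 = ⊥ := by
  rw [pow_succ, eq_bot_iff, Ideal.mul_le]
  intro x hx y hy
  obtain ⟨w, -, rfl⟩ := restrictScalars_maximalIdeal_sq.le hx
  exact socleInclusion_mul_eq_zero w hy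

lemma restrictScalars_maximalIdeal_sq_eq_range
    (hB : Submodule.map₂ B.toLinearMap ⊤ ⊤ = ⊤) :
    (𝔪 ^ 2).restrictScalars k = LinearMap.range B.socleInclusion := by
  rw [restrictScalars_maximalIdeal_sq, hB, Submodule.map_top]

lemma maximalIdeal_sq_ne_bot [Nontrivial W] (hB : Submodule.map₂ B.toLinearMap ⊤ ⊤ = ⊤) :
    𝔪 ^ 2 ≠ ⊥ := by
  intro h
  obtain ⟨w, hw⟩ := exists_ne (0 : W)
  have mem_sq : B.socleInclusion w ∈ 𝔪 ^ 2 :=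
    (restrictScalars_maximalIdeal_sq_eq_range hB).ge ⟨w, rfl⟩
  rw [h, Ideal.mem_bot, map_eq_zero_iff _ socleInclusion_injective] at mem_sq
  exact hw mem_sq

lemma colon_maximalIdeal_eq [Nontrivial W] (hB : Submodule.map₂ B.toLinearMap ⊤ ⊤ = ⊤)
    (hker : LinearMap.ker B.toLinearMap = ⊥) :
    (⊥ : Ideal B.GradedAlgebra).colon 𝔪 = 𝔪 ^ 2 := by
  apply le_antisymm
  · have colon_ne_top : (⊥ : Ideal B.GradedAlgebra).colon 𝔪 ≠ ⊤ := by
      rw [Ne, Submodule.colon_eq_top_iff_subset]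
      intro h
      exact maximalIdeal_sq_ne_bot hB (le_bot_iff.1 ((Ideal.pow_le_self two_ne_zero).trans h))
    intro x hx
    lift x to B.AugIdeal using
      mem_maximalIdeal_unitization.1 (IsLocalRing.le_maximalIdeal colon_ne_top hx)
    have deg1_mem_ker : AugIdeal.deg1 B x ∈ LinearMap.ker B.toLinearMap := by
      ext v
      apply socleInclusion_injective (B := B)
      rw [LinearMap.zero_apply, map_zero, ← AugIdeal.deg1_ofDeg1 B v, ← inr_mul_inr]
      exact Submodule.mem_colon.1 hx _ (mem_maximalIdeal_unitization.2 rfl)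
    rw [hker, Submodule.mem_bot, ← LinearMap.mem_ker, AugIdeal.ker_deg1] at deg1_mem_ker
    obtain ⟨w, rfl⟩ := deg1_mem_ker
    exact (restrictScalars_maximalIdeal_sq_eq_range hB).ge ⟨w, rfl⟩
  · intro x hx
    obtain ⟨w, -, rfl⟩ := restrictScalars_maximalIdeal_sq.le hx
    exact Submodule.mem_colon.2 fun y hy => socleInclusion_mul_eq_zero w hy

lemma finrank_maximalIdeal_sq (hB : Submodule.map₂ B.toLinearMap ⊤ ⊤ = ⊤) :
    finrank k ((𝔪 ^ 2).restrictScalars k) = finrank k W := by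
  rw [restrictScalars_maximalIdeal_sq_eq_range hB,
    LinearMap.finrank_range_of_inj socleInclusion_injective]

variable [Module.Finite k V] [Module.Finite k W]

instance : Module.Finite k B.AugIdeal := inferInstanceAs (Module.Finite k (V × W))

instance : Module.Finite k B.GradedAlgebra := .equiv (Unitization.linearEquiv k k B.AugIdeal).symm

lemma finrank_augIdeal : finrank k B.AugIdeal = finrank k V + finrank k W :=
  Module.finrank_prod (R := k) (M := V) (M' := W)

lemma finrank_maximalIdeal :
    finrank k ((𝔪).restrictScalars k) = finrank k V + finrank k W := by
  rw [restrictScalars_maximalIdeal_unitization,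
    LinearMap.finrank_range_of_inj Unitization.inrHom_injective, finrank_augIdeal]

lemma finrank_gradedAlgebra :
    finrank k B.GradedAlgebra = 1 + (finrank k V + finrank k W) := by
  rw [(Unitization.linearEquiv k k B.AugIdeal).finrank_eq, Module.finrank_prod,
    Module.finrank_self, finrank_augIdeal]

end Field

section HilbertFunction

variable {k V W : Type} [Field k] [AddCommGroup V] [Module k V] [AddCommGroup W] [Module k W]
  {B : SymmBilinMap k V W}

local notation "𝔪" => maximalIdeal (GradedAlgebra B)

lemma isLevelOfType_gradedAlgebra [Nontrivial W]
    (hB : Submodule.map₂ B.toLinearMap ⊤ ⊤ = ⊤) (hker : LinearMap.ker B.toLinearMap = ⊥) :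
    IsLevelOfType k B.GradedAlgebra 𝔪 2 (finrank k W) := by
  refine ⟨maximalIdeal_sq_ne_bot hB, maximalIdeal_cube, colon_maximalIdeal_eq hB hker, ?_⟩
  rw [colon_maximalIdeal_eq hB hker, finrank_maximalIdeal_sq hB]

lemma HF_gradedAlgebra [Module.Finite k V] [Module.Finite k W]
    (hB : Submodule.map₂ B.toLinearMap ⊤ ⊤ = ⊤) (j : ℕ) :
    HF k B.GradedAlgebra 𝔪 j =
      if j = 0 then 1 else if j = 1 then finrank k V else if j = 2 then finrank k W else 0 := by
  have dim_step := HF_add_finrank_pow_succ (k := k) 𝔪 j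
  match j with
  | 0 =>
    rw [pow_zero, Ideal.one_eq_top, Submodule.restrictScalars_top, finrank_top,
      finrank_gradedAlgebra, zero_add, pow_one, finrank_maximalIdeal] at dim_step
    exact Nat.add_right_cancel dim_step
  | 1 =>
    rw [pow_one, finrank_maximalIdeal, finrank_maximalIdeal_sq hB] at dim_step
    exact Nat.add_right_cancel dim_step
  | 2 =>
    rw [finrank_maximalIdeal_sq hB, maximalIdeal_cube, Submodule.restrictScalars_bot,
      finrank_bot] at dim_step
    exact dim_step
  | n + 3 =>
    rw [pow_add _ n 3, maximalIdeal_cube, Ideal.mul_bot, Submodule.restrictScalars_bot,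
      finrank_bot] at dim_step
    exact (Nat.add_eq_zero_iff.1 dim_step).1

end HilbertFunction

section SymSquare

variable (R ι : Type*) [CommRing R] [Fintype ι] [DecidableEq ι]

/-- The universal symmetric bilinear map `R^ι × R^ι → Sym² (R^ι)`, with `Sym² (R^ι)` encoded by
coordinates with respect to the monomials `e i * e j`, indexed by `s(i, j)`. -/
def symSquare : SymmBilinMap R (ι → R) (Sym2 ι → R) where
  toLinearMap := Matrix.toLinearMap₂' R (Matrix.of fun i j => Pi.single s(i, j) 1)
  symm v w := by
    simp only [Matrix.toLinearMap₂'_apply, Matrix.of_apply]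
    rw [Finset.sum_comm]
    exact Finset.sum_congr rfl fun i _ => Finset.sum_congr rfl fun j _ => by
      rw [Sym2.eq_swap, smul_comm]

lemma symSquare_single (i j : ι) :
    (symSquare R ι).toLinearMap (Pi.single i 1) (Pi.single j 1) = Pi.single s(i, j) 1 := by
  simp [symSquare, Matrix.toLinearMap₂'_apply, Pi.single_apply i, Pi.single_apply j]

lemma map₂_symSquare : Submodule.map₂ (symSquare R ι).toLinearMap ⊤ ⊤ = ⊤ := by
  rw [eq_top_iff, ← (Pi.basisFun R (Sym2 ι)).span_eq, Submodule.span_le]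
  rintro _ ⟨⟨i, j⟩, rfl⟩
  rw [Pi.basisFun_apply]
  exact symSquare_single R ι i j ▸ Submodule.apply_mem_map₂ _ Submodule.mem_top Submodule.mem_top

/-- The linear form on `Sym² (R^ι)` that sums the coordinates of the squares `e i * e i`; it
corresponds to the dot product on `R^ι`. -/
def diagSum : (Sym2 ι → R) →ₗ[R] R := ∑ i, LinearMap.proj s(i, i)

lemma symSquare_apply_diag (v w : ι → R) (i : ι) :
    (symSquare R ι).toLinearMap v w s(i, i) = v i * w i := by
  have diag_eq_iff (j l : ι) : s(i, i) = s(j, l) ↔ i = j ∧ i = l := by simp [and_comm]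
  simp [symSquare, Matrix.toLinearMap₂'_apply, Pi.single_apply, diag_eq_iff, ite_and]

lemma diagSum_symSquare (v w : ι → R) :
    diagSum R ι ((symSquare R ι).toLinearMap v w) = v ⬝ᵥ w := by
  simp only [diagSum, LinearMap.sum_apply, LinearMap.proj_apply, symSquare_apply_diag, dotProduct]

lemma ker_symSquare_postcomp_mkQ {U : Submodule R (Sym2 ι → R)}
    (hU : U ≤ LinearMap.ker (diagSum R ι)) :
    LinearMap.ker ((symSquare R ι).postcomp U.mkQ).toLinearMap = ⊥ := by
  rw [LinearMap.ker_eq_bot']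
  intro v hv
  refine dotProduct_eq_zero v fun w => ?_
  have mem_U : (symSquare R ι).toLinearMap v w ∈ U :=
    (Submodule.Quotient.mk_eq_zero U).1 (LinearMap.congr_fun hv w)
  rw [← diagSum_symSquare]
  exact hU mem_U

end SymSquare

end SymmBilinMap

theorem h_vector_socle_degree_two_general (k : Type) [Field k] (m τ : ℕ) (hτ : 0 < τ) :
    (∃ B : ArtinianLevelLocalAlgebra k 2 τ,
        ∀ j, HF k B.carrier (maximalIdeal B.carrier) j =
          (if j = 0 then 1 else if j = 1 then m else if j = 2 then τ else 0)) ↔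
      τ ≤ (m + 1).choose 2 := by
  constructor
  · rintro ⟨B, hB⟩
    have := B.artinian
    have := finite_of_algebraMap_residue_surjective B.residue_surj
    simpa [hB] using HF_two_le_choose (k := k) (maximalIdeal B.carrier)
  · intro h
    have card_sym2 : finrank k (Sym2 (Fin m) → k) = (m + 1).choose 2 := by simp [Sym2.card]
    obtain ⟨U, hU, rfl⟩ := exists_le_ker_finrank_quotient_eq
      (SymmBilinMap.diagSum k (Fin m)) hτ (h.trans_eq card_sym2.symm)
    have := Module.nontrivial_of_finrank_pos hτ
    let B := (SymmBilinMap.symSquare k (Fin m)).postcomp U.mkQ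
    have hB : Submodule.map₂ B.toLinearMap ⊤ ⊤ = ⊤ :=
      SymmBilinMap.map₂_postcomp _ (SymmBilinMap.map₂_symSquare k (Fin m)) U.mkQ_surjective
    have hker : LinearMap.ker B.toLinearMap = ⊥ := SymmBilinMap.ker_symSquare_postcomp_mkQ k _ hU
    exact ⟨{ carrier := B.GradedAlgebra
             artinian := IsArtinianRing.of_finite k _
             residue_surj := algebraMap_residue_unitization_surjective
             level := B.isLevelOfType_gradedAlgebra hB hker },
      fun j => by simpa using B.HF_gradedAlgebra hB j⟩

/-- **Proposition.** Let `H = (1, m, τ)` with `m, τ` positive. Then `H` is the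
h-vector of an Artinian `2`-level local `k`-algebra if and only if
`τ ≤ C(m+1, 2) = m(m+1)/2`. -/
theorem h_vector_socle_degree_two
    (k : Type) [Field k] [IsAlgClosed k] [CharZero k]
    (m τ : ℕ) (hm : 0 < m) (hτ : 0 < τ) :
    (∃ B : ArtinianLevelLocalAlgebra k 2 τ,
        ∀ j, HF k B.carrier (IsLocalRing.maximalIdeal B.carrier) j =
          (if j = 0 then 1 else if j = 1 then m else if j = 2 then τ else 0)) ↔
      τ ≤ (m + 1).choose 2 :=
  h_vector_socle_degree_two_general k m τ hτ
end

section
/- Let H = (1, m, n, τ) be an h-vector with m > n ≥ τ > 0. Then H is the h-vector of an Artinian 3-level local k-algebra. -/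
set_option synthInstance.maxHeartbeats 1000000
set_option maxHeartbeats 2000000

/-- The dimension of the degree-`i` homogeneous component of the standard graded algebra
`k[x₁,…,x_{m'}]/J`. -/
noncomputable def gradedDim (k : Type) [Field k] (m' : ℕ)
    (J : Ideal (MvPolynomial (Fin m') k)) (i : ℕ) : ℕ :=
  Module.finrank k
    ((MvPolynomial.homogeneousSubmodule (Fin m') k i).map
      ((J : Submodule (MvPolynomial (Fin m') k) (MvPolynomial (Fin m') k)).restrictScalars k).mkQ)

/-- A homogeneous ideal: an ideal generated by homogeneous polynomials. -/
def IsHomogeneousIdeal {k : Type} [Field k] {m' : ℕ}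
    (J : Ideal (MvPolynomial (Fin m') k)) : Prop :=
  ∃ S : Set (MvPolynomial (Fin m') k),
    (∀ p ∈ S, ∃ d, p.IsHomogeneous d) ∧ J = Ideal.span S

/-- A numerical function is an O-sequence (i.e. satisfies the conditions of Macaulay's
theorem) iff it is the Hilbert function of some standard graded `k`-algebra. -/
def IsOSequence (k : Type) [Field k] (H : ℕ → ℕ) : Prop :=
  ∃ (m' : ℕ) (J : Ideal (MvPolynomial (Fin m') k)),
    IsHomogeneousIdeal J ∧ ∀ i, gradedDim k m' J i = H i

/-- The numerical sequence `(a, b, c, d, 0, 0, …)`. -/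
def hVec (a b c d : ℕ) : ℕ → ℕ :=
  fun j => if j = 0 then a else if j = 1 then b else if j = 2 then c else
    if j = 3 then d else 0
/-!
Take generators `x₁, …, xₙ` and `y₁, …, y_{m-n}` with all mixed products zero, keep the squares
`xᵢ²` independent, and identify each `xᵢ³` with one of `τ` socle generators, every socle generator
being hit. This gives Hilbert function `(1, n, n, τ)` on the `x`'s, with socle in degree three. The
`yⱼ` add `m - n` to the embedding dimension only: setting `yⱼ²` equal to a socle generator keeps
`yⱼ` out of the socle, and as that generator already lies in `𝔪³`, the square does not contribute to
`𝔪² / 𝔪³`. It is the inhomogeneous relations `yⱼ² = xᵢ³` that make the algebra local, not graded.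

Intrinsically, `k^n` and `k^{m-n}` may be replaced by commutative algebras `R` and `W`, with linear
maps `φ : R → S` and `ψ : W → S` for which `(a, b) ↦ φ (a b)` and `(a, b) ↦ ψ (a b)` are
nondegenerate.
-/

section HilbertFunction

theorem finrank_map_eq_finrank_map {K M E F : Type*} [Ring K] [AddCommGroup M] [Module K M]
    [AddCommGroup E] [Module K E] [AddCommGroup F] [Module K F] (P : Submodule K M)
    (f : M →ₗ[K] E) (g : M →ₗ[K] F) (h : ∀ a ∈ P, f a = 0 ↔ g a = 0) :
    Module.finrank K (P.map f) = Module.finrank K (P.map g) := by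
  have ker_eq : (f.domRestrict P).ker = (g.domRestrict P).ker := by
    ext a
    exact h a a.2
  rw [← LinearMap.range_domRestrict, ← LinearMap.range_domRestrict]
  exact ((f.domRestrict P).quotKerEquivRange.symm ≪≫ₗ Submodule.quotEquivOfEq _ _ ker_eq ≪≫ₗ
    (g.domRestrict P).quotKerEquivRange).finrank_eq

variable {k A : Type} [Field k] [CommRing A] [Algebra k A] {I : Ideal A}

theorem HF_eq_finrank {E : Type*} [AddCommGroup E] [Module k E] {j : ℕ} (f : A →ₗ[k] E)
    (hsurj : ∀ e, ∃ a ∈ I ^ j, f a = e) (hker : ∀ a ∈ I ^ j, f a = 0 ↔ a ∈ I ^ (j + 1)) :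
    HF k A I j = Module.finrank k E := by
  have map_eq_top : ((I ^ j).restrictScalars k).map f = ⊤ :=
    eq_top_iff.2 fun e _ => hsurj e
  rw [HF, ← finrank_top k E, ← map_eq_top]
  refine finrank_map_eq_finrank_map _ _ _ fun a ha => ?_
  rw [hker a ha, Submodule.mkQ_apply, Submodule.Quotient.mk_eq_zero,
    Submodule.restrictScalars_mem]

theorem HF_eq_zero {j : ℕ} (h : I ^ j = ⊥) : HF k A I j = 0 := by
  rw [HF, h, Submodule.restrictScalars_bot, Submodule.map_bot, finrank_bot]

theorem HF_eq_finrank_pow {j : ℕ} (h : I ^ (j + 1) = ⊥) :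
    HF k A I j = Module.finrank k ((I ^ j).restrictScalars k) := by
  conv_rhs => rw [← Submodule.map_id ((I ^ j).restrictScalars k)]
  refine finrank_map_eq_finrank_map _ _ _ fun a _ => ?_
  simp [h]

theorem isLevelOfType_of_HF_eq {s τ : ℕ} (hτ : 0 < τ) (hpow : I ^ (s + 1) = ⊥)
    (hsoc : (⊥ : Ideal A).colon I = I ^ s) (hHF : HF k A I s = τ) : IsLevelOfType k A I s τ := by
  refine ⟨fun h => ?_, hpow, hsoc, ?_⟩
  · rw [← hHF, HF_eq_zero h] at hτ
    exact hτ.false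
  · rw [hsoc, ← HF_eq_finrank_pow hpow, hHF]

end HilbertFunction

section Augmentation

instance {k N : Type*} [CommRing k] [AddCommGroup N] [Module k N] [Module.Finite k N] :
    Module.Finite k (Unitization k N) :=
  .equiv (Unitization.linearEquiv k k N).symm

theorem isLocalRing_of_isMaximal_of_pow_eq_bot_s4 {A : Type*} [CommRing A] {I : Ideal A}
    [hI : I.IsMaximal] {s : ℕ} (h : I ^ s = ⊥) : IsLocalRing A :=
  .of_unique_max_ideal ⟨I, hI, fun _ hJ =>
    (hI.eq_of_le hJ.ne_top (hJ.isPrime.le_of_pow_le (h.trans_le bot_le))).symm⟩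

theorem algebraMap_quotient_ker_surjective {k A : Type*} [CommRing k] [CommRing A] [Algebra k A]
    (ε : A →ₐ[k] k) : Function.Surjective (algebraMap k (A ⧸ RingHom.ker ε)) := by
  intro z
  obtain ⟨a, rfl⟩ := Ideal.Quotient.mk_surjective z
  refine ⟨ε a, ?_⟩
  rw [← Ideal.Quotient.mk_algebraMap, Ideal.Quotient.eq, RingHom.mem_ker]
  simp

theorem exists_artinianLevelLocalAlgebra_of_augmentation {k A : Type} [Field k] [CommRing A]
    [Algebra k A] [Module.Finite k A] (ε : A →ₐ[k] k) {s τ : ℕ}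
    (h : IsLevelOfType k A (RingHom.ker ε) s τ) :
    ∃ B : ArtinianLevelLocalAlgebra k s τ, ∀ j,
      HF k B.carrier (IsLocalRing.maximalIdeal B.carrier) j = HF k A (RingHom.ker ε) j := by
  have isMaximal : (RingHom.ker ε).IsMaximal :=
    RingHom.ker_isMaximal_of_surjective ε fun r => ⟨algebraMap k A r, ε.commutes r⟩
  have isLocalRing : IsLocalRing A := isLocalRing_of_isMaximal_of_pow_eq_bot_s4 h.2.1
  have ker_eq : RingHom.ker ε = IsLocalRing.maximalIdeal A := IsLocalRing.eq_maximalIdeal isMaximal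
  exact ⟨{ carrier := A
           artinian := IsArtinianRing.of_finite k A
           residue_surj := ker_eq ▸ algebraMap_quotient_ker_surjective ε
           level := ker_eq ▸ h }, fun j => congr_arg (HF k A · j) ker_eq.symm⟩

end Augmentation

/-- The nilpotent commutative `k`-algebra `𝔪 = R ⊕ W ⊕ R ⊕ S` attached to linear maps `φ : R → S`
and `ψ : W → S`; its unitization is the local algebra with maximal ideal `𝔪`. The summands are
spanned by the generators `x`, the generators `y`, the products `q` of two `x`'s, and the socle `s`.
Products of three `x`'s are read in `S` through `φ`, products of two `y`'s through `ψ`, and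
`x y = 0`. -/
@[ext]
structure CubicNilAlgebra {k R W S : Type*} [CommRing k] [CommRing R] [Algebra k R] [CommRing W]
    [Algebra k W] [AddCommGroup S] [Module k S] (φ : R →ₗ[k] S) (ψ : W →ₗ[k] S) where
  x : R
  y : W
  q : R
  s : S

namespace CubicNilAlgebra

section Algebra

variable {k R W S : Type*} [CommRing k] [CommRing R] [Algebra k R] [CommRing W] [Algebra k W]
  [AddCommGroup S] [Module k S] {φ : R →ₗ[k] S} {ψ : W →ₗ[k] S}

variable (φ ψ) in
/-- The coordinates of an element of `CubicNilAlgebra φ ψ`. -/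
def equivProd : CubicNilAlgebra φ ψ ≃ R × W × R × S where
  toFun a := (a.x, a.y, a.q, a.s)
  invFun v := ⟨v.1, v.2.1, v.2.2.1, v.2.2.2⟩

instance : AddCommGroup (CubicNilAlgebra φ ψ) := (equivProd φ ψ).addCommGroup

instance : Module k (CubicNilAlgebra φ ψ) := (equivProd φ ψ).module k

instance : Mul (CubicNilAlgebra φ ψ) where
  mul a b := ⟨0, 0, a.x * b.x, φ (a.x * b.q + a.q * b.x) + ψ (a.y * b.y)⟩

section Coordinates

variable (a b : CubicNilAlgebra φ ψ) (r : k)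

@[simp] theorem x_zero : (0 : CubicNilAlgebra φ ψ).x = 0 := rfl
@[simp] theorem y_zero : (0 : CubicNilAlgebra φ ψ).y = 0 := rfl
@[simp] theorem q_zero : (0 : CubicNilAlgebra φ ψ).q = 0 := rfl
@[simp] theorem s_zero : (0 : CubicNilAlgebra φ ψ).s = 0 := rfl
@[simp] theorem x_add : (a + b).x = a.x + b.x := rfl
@[simp] theorem y_add : (a + b).y = a.y + b.y := rfl
@[simp] theorem q_add : (a + b).q = a.q + b.q := rfl
@[simp] theorem s_add : (a + b).s = a.s + b.s := rfl
@[simp] theorem x_smul : (r • a).x = r • a.x := rfl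
@[simp] theorem y_smul : (r • a).y = r • a.y := rfl
@[simp] theorem q_smul : (r • a).q = r • a.q := rfl
@[simp] theorem s_smul : (r • a).s = r • a.s := rfl
@[simp] theorem x_mul : (a * b).x = 0 := rfl
@[simp] theorem y_mul : (a * b).y = 0 := rfl
@[simp] theorem q_mul : (a * b).q = a.x * b.x := rfl
@[simp] theorem s_mul : (a * b).s = φ (a.x * b.q + a.q * b.x) + ψ (a.y * b.y) := rfl

end Coordinates

instance : NonUnitalCommRing (CubicNilAlgebra φ ψ) where
  left_distrib a b c := by ext <;> simp [mul_add, add_add_add_comm]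
  right_distrib a b c := by ext <;> simp [add_mul, add_add_add_comm]
  zero_mul a := by ext <;> simp
  mul_zero a := by ext <;> simp
  mul_assoc a b c := by ext <;> simp [mul_assoc]
  mul_comm a b := by ext <;> simp [mul_comm, add_comm]

instance : IsScalarTower k (CubicNilAlgebra φ ψ) (CubicNilAlgebra φ ψ) where
  smul_assoc r a b := by ext <;> simp

instance : SMulCommClass k (CubicNilAlgebra φ ψ) (CubicNilAlgebra φ ψ) where
  smul_comm r a b := by ext <;> simp

instance [Module.Finite k R] [Module.Finite k W] [Module.Finite k S] :
    Module.Finite k (CubicNilAlgebra φ ψ) :=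
  .equiv ((equivProd φ ψ).linearEquiv k).symm

variable (φ ψ) in
/-- The coordinates `(x, y)` as a linear map, which identifies `𝔪 / 𝔪²` with `R × W`. -/
@[simps]
def xyHom : CubicNilAlgebra φ ψ →ₗ[k] R × W where
  toFun a := (a.x, a.y)
  map_add' _ _ := rfl
  map_smul' _ _ := rfl

variable (φ ψ) in
/-- The coordinate `q` as a linear map, which identifies `𝔪² / 𝔪³` with `R`. -/
@[simps]
def qHom : CubicNilAlgebra φ ψ →ₗ[k] R where
  toFun := q
  map_add' _ _ := rfl
  map_smul' _ _ := rfl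

variable (φ ψ) in
/-- The coordinate `s` as a linear map, which identifies `𝔪³` with `S`. -/
@[simps]
def sHom : CubicNilAlgebra φ ψ →ₗ[k] S where
  toFun := s
  map_add' _ _ := rfl
  map_smul' _ _ := rfl

variable (φ ψ) in
/-- The augmentation ideal of the unitization of `CubicNilAlgebra φ ψ`. -/
abbrev augIdeal : Ideal (Unitization k (CubicNilAlgebra φ ψ)) :=
  RingHom.ker (Unitization.fstHom k (CubicNilAlgebra φ ψ))

theorem mem_augIdeal {a : Unitization k (CubicNilAlgebra φ ψ)} :
    a ∈ augIdeal φ ψ ↔ a.fst = 0 :=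
  Iff.rfl

theorem inr_mem_augIdeal (a : CubicNilAlgebra φ ψ) :
    (a : Unitization k (CubicNilAlgebra φ ψ)) ∈ augIdeal φ ψ :=
  Unitization.fst_inr k a

theorem mem_augIdeal_sq (hφ : Function.Surjective φ)
    {a : Unitization k (CubicNilAlgebra φ ψ)} :
    a ∈ augIdeal φ ψ ^ 2 ↔ a.fst = 0 ∧ a.snd.x = 0 ∧ a.snd.y = 0 := by
  rw [pow_two]
  refine ⟨fun h => ?_, fun ⟨hfst, hx, hy⟩ => ?_⟩
  · induction h using Submodule.mul_induction_on' with
    | mem_mul_mem a ha b hb => simp [mem_augIdeal.1 ha, mem_augIdeal.1 hb]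
    | add a _ b _ ha hb => simp [ha, hb]
  · obtain ⟨c, hc⟩ := hφ a.snd.s
    have factorization : a = ((⟨1, 0, 0, 0⟩ : CubicNilAlgebra φ ψ) : Unitization k _) *
        ((⟨a.snd.q, 0, c, 0⟩ : CubicNilAlgebra φ ψ) : Unitization k _) := by
      ext <;> simp [hfst, hx, hy, hc]
    rw [factorization]
    exact Ideal.mul_mem_mul (inr_mem_augIdeal _) (inr_mem_augIdeal _)

theorem mem_augIdeal_pow_three (hφ : Function.Surjective φ)
    {a : Unitization k (CubicNilAlgebra φ ψ)} :
    a ∈ augIdeal φ ψ ^ 3 ↔ a.fst = 0 ∧ a.snd.x = 0 ∧ a.snd.y = 0 ∧ a.snd.q = 0 := by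
  rw [pow_succ]
  refine ⟨fun h => ?_, fun ⟨hfst, hx, hy, hq⟩ => ?_⟩
  · induction h using Submodule.mul_induction_on' with
    | mem_mul_mem a ha b hb =>
      obtain ⟨hfst, hx, -⟩ := (mem_augIdeal_sq hφ).1 ha
      simp [hfst, hx, mem_augIdeal.1 hb]
    | add a _ b _ ha hb => simp [ha, hb]
  · obtain ⟨c, hc⟩ := hφ a.snd.s
    have factorization : a = ((⟨0, 0, 1, 0⟩ : CubicNilAlgebra φ ψ) : Unitization k _) *
        ((⟨c, 0, 0, 0⟩ : CubicNilAlgebra φ ψ) : Unitization k _) := by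
      ext <;> simp [hfst, hx, hy, hq, hc]
    rw [factorization]
    exact Ideal.mul_mem_mul ((mem_augIdeal_sq hφ).2 (by simp)) (inr_mem_augIdeal _)

theorem augIdeal_pow_four (hφ : Function.Surjective φ) : augIdeal φ ψ ^ 4 = ⊥ := by
  rw [pow_succ, eq_bot_iff, Ideal.mul_le]
  intro a ha b hb
  obtain ⟨hfst, hx, hy, hq⟩ := (mem_augIdeal_pow_three hφ).1 ha
  rw [Ideal.mem_bot]
  ext <;> simp [hfst, hx, hy, hq, mem_augIdeal.1 hb]

theorem augIdeal_pow_three_le_colon (hφ : Function.Surjective φ) :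
    augIdeal φ ψ ^ 3 ≤ (⊥ : Ideal _).colon (augIdeal φ ψ) := by
  intro a ha
  rw [Submodule.mem_colon]
  intro b hb
  rw [← augIdeal_pow_four hφ, pow_succ]
  exact Ideal.mul_mem_mul ha hb

theorem colon_augIdeal [FaithfulSMul k R] (hφ : Function.Surjective φ)
    (hφ_sep : ((LinearMap.mul k R).compr₂ φ).SeparatingLeft)
    (hψ_sep : ((LinearMap.mul k W).compr₂ ψ).SeparatingLeft) :
    (⊥ : Ideal _).colon (augIdeal φ ψ) = augIdeal φ ψ ^ 3 := by
  refine le_antisymm (fun a ha => ?_) (augIdeal_pow_three_le_colon hφ)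
  have snd_mul_inr (b : CubicNilAlgebra φ ψ) : (a * b).snd = 0 := by
    rw [show a * b = 0 from Submodule.mem_colon.1 ha b (inr_mem_augIdeal b), Unitization.snd_zero]
  have hfst : a.fst = 0 := by
    apply FaithfulSMul.algebraMap_injective k R
    simpa [Algebra.algebraMap_eq_smul_one] using congr_arg x (snd_mul_inr ⟨1, 0, 0, 0⟩)
  have hx : a.snd.x = 0 := by
    simpa using congr_arg q (snd_mul_inr ⟨1, 0, 0, 0⟩)
  have hy : a.snd.y = 0 := hψ_sep _ fun w => by
    simpa using congr_arg s (snd_mul_inr ⟨0, w, 0, 0⟩)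
  have hq : a.snd.q = 0 := hφ_sep _ fun r => by
    simpa using congr_arg s (snd_mul_inr ⟨r, 0, 0, 0⟩)
  exact (mem_augIdeal_pow_three hφ).2 ⟨hfst, hx, hy, hq⟩

end Algebra

section HilbertFunction

variable {k R W S : Type} [Field k] [CommRing R] [Algebra k R] [CommRing W] [Algebra k W]
  [AddCommGroup S] [Module k S] {φ : R →ₗ[k] S} {ψ : W →ₗ[k] S}

theorem HF_augIdeal_zero : HF k _ (augIdeal φ ψ) 0 = 1 := by
  rw [HF_eq_finrank (Unitization.fstHom k (CubicNilAlgebra φ ψ)).toLinearMap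
    (fun r => ⟨Unitization.inl r, by simp, rfl⟩) (fun a _ => by simp), Module.finrank_self]

theorem HF_augIdeal_one [Module.Finite k R] [Module.Finite k W] (hφ : Function.Surjective φ) :
    HF k _ (augIdeal φ ψ) 1 = Module.finrank k R + Module.finrank k W := by
  rw [HF_eq_finrank (xyHom φ ψ ∘ₗ Unitization.sndHom k k _) ?_ ?_, Module.finrank_prod]
  · rintro ⟨r, w⟩
    exact ⟨(⟨r, w, 0, 0⟩ : CubicNilAlgebra φ ψ), by simp, rfl⟩
  · intro a ha
    rw [pow_one, mem_augIdeal] at ha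
    simp [mem_augIdeal_sq hφ, ha]

theorem HF_augIdeal_two (hφ : Function.Surjective φ) :
    HF k _ (augIdeal φ ψ) 2 = Module.finrank k R := by
  refine HF_eq_finrank (qHom φ ψ ∘ₗ Unitization.sndHom k k _) (fun r => ?_) (fun a ha => ?_)
  · exact ⟨(⟨0, 0, r, 0⟩ : CubicNilAlgebra φ ψ), by simp [mem_augIdeal_sq hφ], rfl⟩
  · rw [mem_augIdeal_sq hφ] at ha
    simp [mem_augIdeal_pow_three hφ, ha]

theorem HF_augIdeal_three (hφ : Function.Surjective φ) :
    HF k _ (augIdeal φ ψ) 3 = Module.finrank k S := by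
  refine HF_eq_finrank (sHom φ ψ ∘ₗ Unitization.sndHom k k _) (fun t => ?_) (fun a ha => ?_)
  · exact ⟨(⟨0, 0, 0, t⟩ : CubicNilAlgebra φ ψ), by simp [mem_augIdeal_pow_three hφ], rfl⟩
  · rw [mem_augIdeal_pow_three hφ] at ha
    simp [augIdeal_pow_four hφ, Unitization.ext_iff, CubicNilAlgebra.ext_iff, ha]

theorem HF_augIdeal [Module.Finite k R] [Module.Finite k W] (hφ : Function.Surjective φ) (j : ℕ) :
    HF k _ (augIdeal φ ψ) j =
      hVec 1 (Module.finrank k R + Module.finrank k W) (Module.finrank k R)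
        (Module.finrank k S) j := by
  match j with
  | 0 => exact HF_augIdeal_zero
  | 1 => exact HF_augIdeal_one hφ
  | 2 => exact HF_augIdeal_two hφ
  | 3 => exact HF_augIdeal_three hφ
  | j + 4 => exact HF_eq_zero (by rw [pow_add, augIdeal_pow_four hφ, Ideal.mul_bot])

theorem isLevelOfType_augIdeal [Module.Finite k S] [Nontrivial S]
    (hφ : Function.Surjective φ) (hφ_sep : ((LinearMap.mul k R).compr₂ φ).SeparatingLeft)
    (hψ_sep : ((LinearMap.mul k W).compr₂ ψ).SeparatingLeft) :
    IsLevelOfType k _ (augIdeal φ ψ) 3 (Module.finrank k S) :=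
  have := hφ.nontrivial
  isLevelOfType_of_HF_eq Module.finrank_pos (augIdeal_pow_four hφ)
    (colon_augIdeal hφ hφ_sep hψ_sep) (HF_augIdeal_three hφ)

end HilbertFunction

end CubicNilAlgebra

section FiberSum

variable (k : Type*) [CommRing k] {ι κ : Type*} [Fintype ι] [DecidableEq κ]

/-- Summation over the fibres of `γ`, i.e. the linear map `k^ι → k^κ` sending the basis vector
`e_i` to `e_{γ i}`. -/
def fiberSum (γ : ι → κ) : (ι → k) →ₗ[k] (κ → k) :=
  Fintype.linearCombination k fun i => Pi.single (γ i) 1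

variable {k} {γ : ι → κ}

theorem fiberSum_single [DecidableEq ι] (i : ι) (c : k) :
    fiberSum k γ (Pi.single i c) = Pi.single (γ i) c := by
  rw [fiberSum, Fintype.linearCombination_apply_single, ← Pi.single_smul, smul_eq_mul, mul_one]

theorem fiberSum_surjective (hγ : Function.Surjective γ) :
    Function.Surjective (fiberSum k γ) := by
  classical
  have := Fintype.ofSurjective γ hγ
  have comp_eq_id : fiberSum k γ ∘ₗ fiberSum k (Function.surjInv hγ) = LinearMap.id := by
    refine LinearMap.pi_ext fun t c => ?_
    simp only [LinearMap.comp_apply, fiberSum_single, Function.surjInv_eq hγ, LinearMap.id_apply]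
  exact fun v => ⟨_, LinearMap.congr_fun comp_eq_id v⟩

theorem separatingLeft_mul_compr₂_fiberSum (γ : ι → κ) :
    ((LinearMap.mul k (ι → k)).compr₂ (fiberSum k γ)).SeparatingLeft := by
  classical
  intro f hf
  ext i
  have single_eq_zero : (Pi.single (γ i) (f i) : κ → k) = 0 := by
    simpa [← Pi.single_mul_right, fiberSum_single] using hf (Pi.single i 1)
  exact Pi.single_eq_zero_iff.1 single_eq_zero

end FiberSum

theorem h_vector_three_level_nonincreasing_general (k : Type) [Field k] (m n τ : ℕ)
    (hnm : n ≤ m) (hτn : τ ≤ n) (hτ : 0 < τ) :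
    ∃ B : ArtinianLevelLocalAlgebra k 3 τ,
      ∀ j, HF k B.carrier (IsLocalRing.maximalIdeal B.carrier) j = hVec 1 m n τ j := by
  have : NeZero τ := ⟨hτ.ne'⟩
  obtain ⟨γ, hγ⟩ : ∃ γ : Fin n → Fin τ, Function.Surjective γ :=
    ⟨_, Function.invFun_surjective (Fin.castLE_injective hτn)⟩
  let φ := fiberSum k γ
  let ψ := fiberSum k fun _ : Fin (m - n) => (0 : Fin τ)
  have hφ : Function.Surjective φ := fiberSum_surjective hγ
  have level : IsLevelOfType k _ (CubicNilAlgebra.augIdeal φ ψ) 3 τ := by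
    simpa using CubicNilAlgebra.isLevelOfType_augIdeal hφ (separatingLeft_mul_compr₂_fiberSum _)
      (separatingLeft_mul_compr₂_fiberSum _)
  obtain ⟨B, hB⟩ := exists_artinianLevelLocalAlgebra_of_augmentation _ level
  refine ⟨B, fun j => ?_⟩
  rw [hB, CubicNilAlgebra.HF_augIdeal hφ]
  simp [Nat.add_sub_cancel' hnm]

/-- **Proposition.** Let `H = (1, m, n, τ)` be an h-vector with `m > n ≥ τ > 0`. Then
`H` is the h-vector of an Artinian `3`-level local `k`-algebra. -/
theorem h_vector_three_level_nonincreasing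
    (k : Type) [Field k] [IsAlgClosed k] [CharZero k] (m n τ : ℕ)
    (hO : IsOSequence k (hVec 1 m n τ))
    (h1 : n < m) (h2 : τ ≤ n) (h3 : 0 < τ) :
    ∃ B : ArtinianLevelLocalAlgebra k 3 τ,
      ∀ j, HF k B.carrier (IsLocalRing.maximalIdeal B.carrier) j = hVec 1 m n τ j := by
  exact h_vector_three_level_nonincreasing_general k m n τ h1.le h2 h3
end

section
/- Let H = (1, m, n, τ) be an h-vector with n < τ. Then H is the h-vector of an Artinian 3-level local k-algebra. -/
set_option synthInstance.maxHeartbeats 1000000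
set_option maxHeartbeats 2000000

/-!
Starting from the degree two and three parts of a graded algebra with Hilbert function
`(1, m, n, τ)`, look for a space `K` of cubic forms of codimension `τ` whose colon space by the
linear forms has codimension exactly `n` in the quadratic forms. That codimension is at most `n` for
the cubics of the given ideal. Cutting `K` with the kernel of evaluation at a point cuts the colon
space with the kernel of evaluation at the same point, hence raises its codimension by at most one,
and by exactly one for a suitable point. Once it equals `n`, the colon space is already determined
by `n` hyperplanes containing `K`, and because `n ≤ τ` one can enlarge `K` back to codimension `τ`.

The graded algebra with these quadratic and cubic parts fails to be level only through the linear
forms that multiply every quadratic form into `K`. Replacing the condition that the cubic part of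
`f` lies in `K` by the condition that the cubic part plus `q f₂ • s` lies in `K`, where `f₂` is
the quadratic part of `f`, `s ∉ K` is a cubic form and `(u, v) ↦ q (u * v)` is nondegenerate on
those linear forms, gives a local algebra with the same Hilbert function whose socle is `𝔪³`.
-/

open Module

section Codimension

variable {k V W : Type*} [Field k] [AddCommGroup V] [Module k V] [AddCommGroup W] [Module k W]

theorem finrank_map_eq_finrank_quotient_submoduleOf (f : V →ₗ[k] W) (p : Submodule k V) :
    finrank k (p.map f) = finrank k (p ⧸ (LinearMap.ker f).submoduleOf p) := by
  rw [← LinearMap.range_domRestrict, ← (f.domRestrict p).quotKerEquivRange.finrank_eq,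
    LinearMap.ker_domRestrict]
  rfl

variable [FiniteDimensional k V] {K L : Submodule k V}

theorem finrank_quotient_le_of_le (h : K ≤ L) : finrank k (V ⧸ L) ≤ finrank k (V ⧸ K) :=
  LinearMap.finrank_le_finrank_of_surjective (Submodule.factor_surjective h)

theorem finrank_quotient_lt_of_lt (h : K < L) : finrank k (V ⧸ L) < finrank k (V ⧸ K) := by
  have := Submodule.finrank_lt_finrank_of_lt h
  have := K.finrank_quotient_add_finrank
  have := L.finrank_quotient_add_finrank
  lia

theorem finrank_quotient_inf_ker_le (K : Submodule k V) (φ : Dual k V) :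
    finrank k (V ⧸ K ⊓ LinearMap.ker φ) ≤ finrank k (V ⧸ K) + 1 := by
  have := K.finrank_sup_add_finrank_inf_eq (LinearMap.ker φ)
  have := (K ⊔ LinearMap.ker φ).finrank_le
  have := φ.finrank_range_add_finrank_ker
  have := (LinearMap.range φ).finrank_le.trans_eq (finrank_self k)
  have := K.finrank_quotient_add_finrank
  have := (K ⊓ LinearMap.ker φ).finrank_quotient_add_finrank
  lia

theorem exists_between_finrank_quotient_eq (hKL : K ≤ L) {t : ℕ}
    (hL : finrank k (V ⧸ L) ≤ t) (hK : t ≤ finrank k (V ⧸ K)) :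
    ∃ M, K ≤ M ∧ M ≤ L ∧ finrank k (V ⧸ M) = t := by
  induction t, hL using Nat.le_induction with
  | base => exact ⟨L, hKL, le_rfl, rfl⟩
  | succ t _ ih =>
    obtain ⟨M, hKM, hML, hM⟩ := ih (by lia)
    have hne : K ≠ M := by rintro rfl; lia
    obtain ⟨v, hvM, hvK⟩ := SetLike.exists_of_lt (hKM.lt_of_ne hne)
    obtain ⟨φ, hφv, hKφ⟩ := Submodule.exists_le_ker_of_notMem hvK
    refine ⟨M ⊓ LinearMap.ker φ, le_inf hKM hKφ, inf_le_left.trans hML, le_antisymm ?_ ?_⟩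
    · exact hM ▸ finrank_quotient_inf_ker_le M φ
    · exact hM ▸ finrank_quotient_lt_of_lt (inf_lt_left.2 fun hMφ => hφv (hMφ hvM))

end Codimension

section RightColon

variable {k E₁ E₂ E₃ : Type*} [Field k] [AddCommGroup E₁] [Module k E₁] [AddCommGroup E₂]
  [Module k E₂] [AddCommGroup E₃] [Module k E₃]

/-- A pairing has separating rank-one functionals if the functionals `φ` on `E₃` for which
`φ (B x y)` is a product `α x * ψ y` with `α ≠ 0` have `ψ`s without common zeros. For the
multiplication of polynomials these are the evaluations at points. -/
def HasSeparatingRankOneFunctionals (B : E₁ →ₗ[k] E₂ →ₗ[k] E₃) : Prop :=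
  ∀ y ≠ 0, ∃ (φ : Dual k E₃) (α : Dual k E₁) (ψ : Dual k E₂),
    (∀ x y, φ (B x y) = α x * ψ y) ∧ α ≠ 0 ∧ ψ y ≠ 0

/-- The colon space `(K : E₁)` of a subspace `K` of `E₃` along a bilinear pairing
`B : E₁ × E₂ → E₃`: all `y` in `E₂` with `B x y ∈ K` for every `x`. -/
def rightColon (B : E₁ →ₗ[k] E₂ →ₗ[k] E₃) (K : Submodule k E₃) : Submodule k E₂ :=
  ⨅ x, K.comap (B x)

variable {B : E₁ →ₗ[k] E₂ →ₗ[k] E₃} {K L : Submodule k E₃}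

theorem mem_rightColon {y : E₂} : y ∈ rightColon B K ↔ ∀ x, B x y ∈ K := by
  simp only [rightColon, Submodule.mem_iInf, Submodule.mem_comap]

theorem rightColon_mono (h : K ≤ L) : rightColon B K ≤ rightColon B L :=
  iInf_mono fun _ => Submodule.comap_mono h

theorem rightColon_inf_ker {φ : Dual k E₃} {α : Dual k E₁} {ψ : Dual k E₂}
    (hφ : ∀ x y, φ (B x y) = α x * ψ y) (hα : α ≠ 0) :
    rightColon B (K ⊓ LinearMap.ker φ) = rightColon B K ⊓ LinearMap.ker ψ := by
  obtain ⟨x₀, hx₀⟩ := DFunLike.ne_iff.1 hα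
  ext y
  simp only [mem_rightColon, Submodule.mem_inf, LinearMap.mem_ker, hφ, mul_eq_zero,
    forall_and, and_congr_right_iff]
  exact fun _ => ⟨fun h => (h x₀).resolve_left hx₀, fun h x => Or.inr h⟩

variable [FiniteDimensional k E₂]

theorem HasSeparatingRankOneFunctionals.exists_le_finrank_quotient_rightColon_eq
    (hB : HasSeparatingRankOneFunctionals B) (K : Submodule k E₃) {n : ℕ}
    (hK : finrank k (E₂ ⧸ rightColon B K) ≤ n) (hn : n ≤ finrank k E₂) :
    ∃ L ≤ K, finrank k (E₂ ⧸ rightColon B L) = n := by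
  induction n, hK using Nat.le_induction with
  | base => exact ⟨K, le_rfl, rfl⟩
  | succ n _ ih =>
    obtain ⟨L, hLK, hL⟩ := ih (by lia)
    have hne : rightColon B L ≠ ⊥ := by
      intro h
      rw [h, (Submodule.quotEquivOfEqBot _ rfl).finrank_eq] at hL
      lia
    obtain ⟨y, hyL, hy⟩ := (Submodule.ne_bot_iff _).1 hne
    obtain ⟨φ, α, ψ, hφ, hα, hψy⟩ := hB y hy
    refine ⟨L ⊓ LinearMap.ker φ, inf_le_left.trans hLK, ?_⟩
    rw [rightColon_inf_ker hφ hα]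
    refine le_antisymm ?_ ?_
    · exact hL ▸ finrank_quotient_inf_ker_le _ ψ
    · exact hL ▸ finrank_quotient_lt_of_lt (inf_lt_left.2 fun h => hψy (h hyL))

variable [FiniteDimensional k E₃]

/- Each hyperplane containing `K` added to the intersection `L` can be chosen to cut down
`rightColon B L`, so `finrank k (E₂ ⧸ rightColon B K)` hyperplanes suffice. -/
theorem exists_ge_rightColon_eq_finrank_quotient_le (B : E₁ →ₗ[k] E₂ →ₗ[k] E₃)
    (K : Submodule k E₃) :
    ∃ L, K ≤ L ∧ rightColon B L = rightColon B K ∧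
      finrank k (E₃ ⧸ L) ≤ finrank k (E₂ ⧸ rightColon B K) := by
  suffices h : ∀ r ≤ finrank k (E₂ ⧸ rightColon B K), ∃ L, K ≤ L ∧ finrank k (E₃ ⧸ L) ≤ r ∧
      r ≤ finrank k (E₂ ⧸ rightColon B L) by
    obtain ⟨L, hKL, hL, hL'⟩ := h _ le_rfl
    exact ⟨L, hKL, ((rightColon_mono hKL).eq_of_not_lt fun hlt =>
      (finrank_quotient_lt_of_lt hlt).not_ge hL').symm, hL⟩
  intro r hr
  induction r with
  | zero => exact ⟨⊤, le_top, finrank_zero_of_subsingleton.le, Nat.zero_le _⟩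
  | succ r ih =>
    obtain ⟨L, hKL, hL, hrL⟩ := ih (by lia)
    obtain hrL | hrL := hrL.lt_or_eq
    · exact ⟨L, hKL, by lia, hrL⟩
    have hne : rightColon B K ≠ rightColon B L := by
      intro h
      rw [h] at hr
      lia
    obtain ⟨y, hyL, hyK⟩ := SetLike.exists_of_lt ((rightColon_mono hKL).lt_of_ne hne)
    obtain ⟨x, hxy⟩ : ∃ x, B x y ∉ K := by simpa only [mem_rightColon, not_forall] using hyK
    obtain ⟨φ, hφ, hKφ⟩ := Submodule.exists_le_ker_of_notMem hxy
    refine ⟨L ⊓ LinearMap.ker φ, le_inf hKL hKφ,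
      (finrank_quotient_inf_ker_le L φ).trans (by lia), ?_⟩
    rw [hrL]
    refine finrank_quotient_lt_of_lt ((rightColon_mono inf_le_left).lt_of_not_ge fun h => ?_)
    exact hφ (mem_rightColon.1 (h hyL) x).2

theorem HasSeparatingRankOneFunctionals.exists_finrank_quotient_rightColon_eq
    (hB : HasSeparatingRankOneFunctionals B) {n : ℕ}
    (hcolon : finrank k (E₂ ⧸ rightColon B K) ≤ n) (hn : n ≤ finrank k E₂)
    (hK : n ≤ finrank k (E₃ ⧸ K)) :
    ∃ L : Submodule k E₃, finrank k (E₃ ⧸ L) = finrank k (E₃ ⧸ K) ∧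
      finrank k (E₂ ⧸ rightColon B L) = n := by
  obtain ⟨K', hK'K, hK'⟩ := hB.exists_le_finrank_quotient_rightColon_eq K hcolon hn
  obtain ⟨M, hK'M, hcolonM, hM⟩ := exists_ge_rightColon_eq_finrank_quotient_le B K'
  obtain ⟨L, hK'L, hLM, hL⟩ := exists_between_finrank_quotient_eq hK'M
    (hM.trans (hK'.trans_le hK)) (finrank_quotient_le_of_le hK'K)
  refine ⟨L, hL, hK' ▸ ?_⟩
  rw [le_antisymm ((rightColon_mono hLM).trans_eq hcolonM) (rightColon_mono hK'L)]

end RightColon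

open MvPolynomial

section HomogeneousSubmodule

variable {σ k : Type*} [Field k]

instance finiteDimensional_homogeneousSubmodule [Finite σ] (d : ℕ) :
    FiniteDimensional k (homogeneousSubmodule σ k d) :=
  Module.Finite.iff_fg.2 (homogeneousSubmodule_fg σ k d)

theorem finrank_homogeneousSubmodule_zero : finrank k (homogeneousSubmodule σ k 0) = 1 := by
  rw [homogeneousSubmodule_zero, Submodule.one_eq_span]
  exact finrank_span_singleton one_ne_zero

theorem finrank_homogeneousSubmodule_one [Fintype σ] :
    finrank k (homogeneousSubmodule σ k 1) = Fintype.card σ := by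
  rw [homogeneousSubmodule_one_eq_span_X, finrank_span_eq_card (linearIndependent_X σ k)]

theorem exists_eval_ne_zero_of_mem_homogeneousSubmodule_two {f : MvPolynomial σ k}
    (hf : f ∈ homogeneousSubmodule σ k 2) (hf0 : f ≠ 0) : ∃ p, eval p f ≠ 0 := by
  contrapose! hf0
  refine hf.eq_zero_of_forall_eval_eq_zero_of_le_card hf0 ?_
  exact_mod_cast Cardinal.two_le_iff.2 (exists_pair_ne k)

theorem hasSeparatingRankOneFunctionals_mul : HasSeparatingRankOneFunctionals
    (DirectSum.gMulLHom k (homogeneousSubmodule σ k ·) (i := 1) (j := 2)) := by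
  intro f hf
  obtain ⟨p, hp⟩ := exists_eval_ne_zero_of_mem_homogeneousSubmodule_two f.2 (by simpa using hf)
  let ev (d : ℕ) : Dual k (homogeneousSubmodule σ k d) :=
    (aeval p).toLinearMap.domRestrict (homogeneousSubmodule σ k d)
  refine ⟨ev 3, ev 1, ev 2, fun g h => map_mul (aeval p) g.1 h.1, fun hev => hp ?_, hp⟩
  have hp0 : p = 0 := by
    ext i
    simpa [ev] using LinearMap.congr_fun hev ⟨X i, isHomogeneous_X k i⟩
  rw [hp0, eval_zero, constantCoeff_eq]
  exact IsHomogeneous.coeff_eq_zero f.2 (by simp)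

theorem aeval_dual_X_of_mem_homogeneousSubmodule_one (α : Dual k (MvPolynomial σ k))
    {f : MvPolynomial σ k} (hf : f ∈ homogeneousSubmodule σ k 1) :
    aeval (fun i => α (X i)) f = α f := by
  rw [homogeneousSubmodule_one_eq_span_X] at hf
  refine LinearMap.eqOn_span (f := (aeval fun i => α (X i)).toLinearMap) ?_ hf
  rintro _ ⟨i, rfl⟩
  exact aeval_X _ i

/- The sum of squares of the coordinates with respect to a basis of `N`. -/
theorem exists_dual_nondegenerate_on_linearForms [Finite σ] {N : Submodule k (MvPolynomial σ k)}
    (hN : N ≤ homogeneousSubmodule σ k 1) :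
    ∃ q : Dual k (MvPolynomial σ k), ∀ f ∈ N, (∀ g ∈ N, q (f * g) = 0) → f = 0 := by
  have : FiniteDimensional k N := Submodule.finiteDimensional_of_le hN
  let b := finBasis k N
  choose α hα using fun i => (b.coord i).exists_extend
  have hαb (i) (f : N) : aeval (fun j => α i (X j)) f.1 = b.repr f i :=
    (aeval_dual_X_of_mem_homogeneousSubmodule_one (α i) (hN f.2)).trans
      (LinearMap.congr_fun (hα i) f)
  refine ⟨∑ i, (aeval fun j => α i (X j)).toLinearMap, fun f hf hq => ?_⟩
  have hrepr : b.repr ⟨f, hf⟩ = 0 := by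
    ext i
    have := hq (b i) (b i).2
    simpa only [LinearMap.sum_apply, AlgHom.toLinearMap_apply, map_mul, hαb, hαb _ ⟨f, hf⟩,
      Basis.repr_self, Finsupp.single_apply, mul_ite, mul_one, mul_zero, Finset.sum_ite_eq,
      Finset.mem_univ, if_true, Finsupp.zero_apply] using this
  simpa using hrepr

/-- The codimension, in the space of forms of degree `d`, of the forms lying in `K`. For a
homogeneous ideal it is the Hilbert function of the quotient. -/
noncomputable def formCodim (K : Submodule k (MvPolynomial σ k)) (d : ℕ) : ℕ :=
  finrank k (homogeneousSubmodule σ k d ⧸ K.submoduleOf (homogeneousSubmodule σ k d))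

theorem formCodim_congr {K L : Submodule k (MvPolynomial σ k)} {d : ℕ}
    (h : ∀ f ∈ homogeneousSubmodule σ k d, f ∈ K ↔ f ∈ L) : formCodim K d = formCodim L d := by
  rw [formCodim, formCodim, show K.submoduleOf (homogeneousSubmodule σ k d) =
    L.submoduleOf (homogeneousSubmodule σ k d) from Submodule.ext fun f => h f f.2]

theorem formCodim_bot (d : ℕ) :
    formCodim (⊥ : Submodule k (MvPolynomial σ k)) d = finrank k (homogeneousSubmodule σ k d) := by
  rw [formCodim, Submodule.submoduleOf, Submodule.comap_bot, Submodule.ker_subtype,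
    (Submodule.quotEquivOfEqBot _ rfl).finrank_eq]

theorem formCodim_eq_zero_iff [Finite σ] {K : Submodule k (MvPolynomial σ k)} {d : ℕ} :
    formCodim K d = 0 ↔ homogeneousSubmodule σ k d ≤ K := by
  rw [formCodim, finrank_zero_iff, Submodule.Quotient.subsingleton_iff,
    Submodule.submoduleOf, Submodule.comap_subtype_eq_top]

theorem submoduleOf_div_homogeneousSubmodule_one
    (L : Submodule k (homogeneousSubmodule σ k 3)) :
    (L.map (homogeneousSubmodule σ k 3).subtype / homogeneousSubmodule σ k 1).submoduleOf
        (homogeneousSubmodule σ k 2) =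
      rightColon (DirectSum.gMulLHom k (homogeneousSubmodule σ k ·) (i := 1) (j := 2)) L := by
  ext y
  rw [mem_rightColon, Submodule.submoduleOf, Submodule.mem_comap,
    Submodule.mem_div_iff_forall_mul_mem]
  refine ⟨fun h x => ?_, fun h x hx => ?_⟩
  · obtain ⟨z, hz, hzxy⟩ := h x.1 x.2
    have hz_eq : z = DirectSum.gMulLHom k (homogeneousSubmodule σ k ·) x y :=
      Subtype.ext (hzxy.trans (mul_comm _ _))
    exact hz_eq ▸ hz
  · exact ⟨_, h ⟨x, hx⟩, mul_comm _ _⟩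

theorem exists_formCodim_div_eq [Finite σ] (J : Ideal (MvPolynomial σ k))
    (hJ : formCodim (J.restrictScalars k) 2 ≤ formCodim (J.restrictScalars k) 3) :
    ∃ K : Submodule k (MvPolynomial σ k),
      formCodim (K / homogeneousSubmodule σ k 1) 2 = formCodim (J.restrictScalars k) 2 ∧
      formCodim K 3 = formCodim (J.restrictScalars k) 3 := by
  have hcolon : (J.restrictScalars k).submoduleOf (homogeneousSubmodule σ k 2) ≤
      rightColon (DirectSum.gMulLHom k (homogeneousSubmodule σ k ·))
        ((J.restrictScalars k).submoduleOf (homogeneousSubmodule σ k 3)) :=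
    fun y hy => mem_rightColon.2 fun x => J.mul_mem_left x.1 hy
  obtain ⟨L, hL3, hL2⟩ :=
    hasSeparatingRankOneFunctionals_mul.exists_finrank_quotient_rightColon_eq
      (finrank_quotient_le_of_le hcolon) (Submodule.finrank_quotient_le _) hJ
  refine ⟨L.map (homogeneousSubmodule σ k 3).subtype, ?_, ?_⟩
  · rw [formCodim, submoduleOf_div_homogeneousSubmodule_one]
    exact hL2
  · rw [formCodim, Submodule.submoduleOf,
      Submodule.comap_map_eq_of_injective (Submodule.subtype_injective _)]
    exact hL3

end HomogeneousSubmodule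

section ChangeOfVariables

variable {k : Type} [Field k] {m : ℕ}

theorem gradedDim_eq_formCodim (J : Ideal (MvPolynomial (Fin m) k)) (d : ℕ) :
    gradedDim k m J d = formCodim (J.restrictScalars k) d := by
  rw [gradedDim, finrank_map_eq_finrank_quotient_submoduleOf, Submodule.ker_mkQ, formCodim]

theorem map_homogeneousSubmodule {σ A : Type*} [CommRing A] [Algebra k A]
    (φ : MvPolynomial σ k →ₐ[k] A) (d : ℕ) :
    (homogeneousSubmodule σ k d).map φ.toLinearMap =
      Submodule.span k (Set.range fun i => φ (X i)) ^ d := by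
  rw [← homogeneousSubmodule_one_pow, Submodule.map_pow, homogeneousSubmodule_one_eq_span_X,
    Submodule.map_span, ← Set.range_comp]
  rfl

theorem gradedDim_ker {A : Type*} [CommRing A] [Algebra k A]
    (φ : MvPolynomial (Fin m) k →ₐ[k] A) (d : ℕ) :
    gradedDim k m (RingHom.ker φ) d =
      finrank k ↥(Submodule.span k (Set.range fun i => φ (X i)) ^ d) := by
  rw [gradedDim_eq_formCodim, ← map_homogeneousSubmodule,
    finrank_map_eq_finrank_quotient_submoduleOf]
  rfl

theorem exists_gradedDim_eq_of_gradedDim_one_eq {m' : ℕ} {J : Ideal (MvPolynomial (Fin m') k)}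
    (hJ : gradedDim k m' J 1 = m) :
    ∃ J' : Ideal (MvPolynomial (Fin m) k), ∀ d, gradedDim k m J' d = gradedDim k m' J d := by
  let V := Submodule.span k (Set.range fun i => Ideal.Quotient.mkₐ k J (X i))
  have hV (d) : gradedDim k m' J d = finrank k ↥(V ^ d) := by
    rw [← gradedDim_ker]
    exact congrArg (gradedDim k m' · d) (Ideal.Quotient.mkₐ_ker k J).symm
  rw [hV, Submodule.pow_one] at hJ
  have : FiniteDimensional k V := Module.Finite.span_of_finite k (Set.finite_range _)
  let b := finBasisOfFinrankEq k V hJ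
  let φ : MvPolynomial (Fin m) k →ₐ[k] MvPolynomial (Fin m') k ⧸ J := aeval fun i => (b i).1
  have hφ : Submodule.span k (Set.range fun i => φ (X i)) = V := by
    have hspan := congrArg (Submodule.map V.subtype) b.span_eq
    rw [Submodule.map_span, ← Set.range_comp, Submodule.map_subtype_top] at hspan
    simpa only [φ, aeval_X, Function.comp_def, Submodule.subtype_apply] using hspan
  exact ⟨RingHom.ker φ, fun d => by rw [gradedDim_ker, hφ, hV]⟩

end ChangeOfVariables

section IdealOfVars

variable {σ R : Type*} [CommRing R]

theorem mem_pow_idealOfVars_iff_homogeneousComponent {f : MvPolynomial σ R} {j : ℕ} :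
    f ∈ idealOfVars σ R ^ j ↔ ∀ d < j, homogeneousComponent d f = 0 := by
  rw [mem_pow_idealOfVars_iff']
  refine ⟨fun h d hd => ?_, fun h x hx => ?_⟩
  · ext x
    rw [coeff_homogeneousComponent, coeff_zero]
    split_ifs with hx
    exacts [h x (hx ▸ hd), rfl]
  · rw [← coeff_zero x, ← h _ hx, coeff_homogeneousComponent, if_pos rfl]

theorem mem_pow_idealOfVars_of_mem_homogeneousSubmodule {f : MvPolynomial σ R} {j : ℕ}
    (hf : f ∈ homogeneousSubmodule σ R j) : f ∈ idealOfVars σ R ^ j :=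
  mem_pow_idealOfVars_iff_homogeneousComponent.2 fun _ hd => by
    rw [homogeneousComponent_of_mem hf, if_neg hd.ne]

theorem sub_homogeneousComponent_mem_pow_idealOfVars {f : MvPolynomial σ R} {j : ℕ}
    (hf : f ∈ idealOfVars σ R ^ j) :
    f - homogeneousComponent j f ∈ idealOfVars σ R ^ (j + 1) := by
  rw [mem_pow_idealOfVars_iff_homogeneousComponent] at hf ⊢
  intro d hd
  rw [map_sub, homogeneousComponent_of_mem (homogeneousComponent_mem j f)]
  split_ifs with hdj
  · rw [hdj, sub_self]
  · rw [hf d (by lia), sub_zero]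

theorem restrictScalars_pow_idealOfVars_eq_sup (j : ℕ) :
    (idealOfVars σ R ^ j).restrictScalars R =
      homogeneousSubmodule σ R j ⊔ (idealOfVars σ R ^ (j + 1)).restrictScalars R := by
  refine le_antisymm (fun f hf => ?_) (sup_le ?_ ?_)
  · rw [← add_sub_cancel (homogeneousComponent j f) f]
    exact Submodule.add_mem_sup (homogeneousComponent_mem j f)
      (sub_homogeneousComponent_mem_pow_idealOfVars hf)
  · exact fun f => mem_pow_idealOfVars_of_mem_homogeneousSubmodule
  · exact Ideal.pow_le_pow_right j.le_succ

attribute [local instance] gradedAlgebra in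
theorem homogeneousComponent_mul_of_mem_homogeneousSubmodule {f g : MvPolynomial σ R} {d e : ℕ}
    (hg : g ∈ homogeneousSubmodule σ R e) :
    homogeneousComponent (d + e) (f * g) = homogeneousComponent d f * g := by
  simp only [← decomposition.decompose'_apply]
  exact DirectSum.coe_decompose_mul_add_of_right_mem (homogeneousSubmodule σ R) hg

attribute [local instance] gradedAlgebra in
theorem homogeneousComponent_mul_eq_zero_of_mem_homogeneousSubmodule {f g : MvPolynomial σ R}
    {d e : ℕ} (hde : d < e) (hg : g ∈ homogeneousSubmodule σ R e) :
    homogeneousComponent d (f * g) = 0 := by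
  rw [← decomposition.decompose'_apply]
  exact DirectSum.coe_decompose_mul_of_right_mem_of_not_le (homogeneousSubmodule σ R) hg hde.not_ge

theorem ker_constantCoeff_eq_idealOfVars :
    RingHom.ker (constantCoeff : MvPolynomial σ R →+* R) = idealOfVars σ R := by
  ext f
  rw [← pow_one (idealOfVars σ R), mem_pow_idealOfVars_iff_homogeneousComponent]
  simp [constantCoeff_eq]

theorem isMaximal_idealOfVars (σ k : Type*) [Field k] : (idealOfVars σ k).IsMaximal :=
  ker_constantCoeff_eq_idealOfVars (σ := σ) (R := k) ▸
    RingHom.ker_isMaximal_of_surjective _ fun r => ⟨C r, constantCoeff_C _ r⟩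

end IdealOfVars

section HilbertFunction

variable {k : Type} [Field k]

section Algebra

variable {A : Type} [CommRing A] [Algebra k A] {mA : Ideal A} {s : ℕ}

theorem finrank_pow_eq_HF (h : mA ^ (s + 1) = ⊥) :
    finrank k ((mA ^ s).restrictScalars k) = HF k A mA s := by
  rw [HF, finrank_map_eq_finrank_quotient_submoduleOf, Submodule.ker_mkQ, h, Submodule.submoduleOf,
    Submodule.restrictScalars_bot, Submodule.comap_bot, Submodule.ker_subtype,
    (Submodule.quotEquivOfEqBot _ rfl).finrank_eq]

theorem isLevelOfType_of_colon_le (h : mA ^ (s + 1) = ⊥)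
    (hcolon : (⊥ : Ideal A).colon mA ≤ mA ^ s) (hpos : 0 < HF k A mA s) :
    IsLevelOfType k A mA s (HF k A mA s) := by
  have hsoc : (⊥ : Ideal A).colon mA = mA ^ s := by
    refine hcolon.antisymm fun a ha => Submodule.mem_colon.2 fun b hb => ?_
    rw [← h, pow_succ]
    exact Ideal.mul_mem_mul ha hb
  refine ⟨fun hbot => ?_, h, hsoc, hsoc ▸ finrank_pow_eq_HF h⟩
  rw [← finrank_pow_eq_HF h, hbot, Submodule.restrictScalars_bot, finrank_bot] at hpos
  exact hpos.false

theorem isLocalRing_of_isMaximal_of_pow_eq_bot_s6 {r : ℕ} (hmax : mA.IsMaximal) (hr : mA ^ r = ⊥) :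
    IsLocalRing A :=
  IsLocalRing.of_unique_max_ideal ⟨mA, hmax, fun _ hP =>
    (hmax.eq_of_le hP.ne_top (hP.isPrime.le_of_pow_le (hr.trans_le bot_le))).symm⟩

theorem exists_artinianLevelLocalAlgebra_HF_eq [IsNoetherianRing A] {τ : ℕ}
    (hmax : mA.IsMaximal) (hres : Function.Surjective (algebraMap k (A ⧸ mA)))
    (hlevel : IsLevelOfType k A mA s τ) :
    ∃ B : ArtinianLevelLocalAlgebra k s τ, ∀ j,
      HF k B.carrier (IsLocalRing.maximalIdeal B.carrier) j = HF k A mA j := by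
  have hnil : mA ^ (s + 1) = ⊥ := hlevel.2.1
  have := isLocalRing_of_isMaximal_of_pow_eq_bot_s6 hmax hnil
  obtain rfl := IsLocalRing.eq_maximalIdeal hmax
  exact ⟨{
    carrier := A
    artinian := (isArtinianRing_iff_isNilpotent_maximalIdeal A).2 ⟨s + 1, hnil⟩
    residue_surj := hres
    level := hlevel }, fun _ => rfl⟩

end Algebra

variable {σ : Type} {I : Ideal (MvPolynomial σ k)}

theorem HF_quotient_eq_formCodim (I : Ideal (MvPolynomial σ k)) (j : ℕ) :
    HF k (MvPolynomial σ k ⧸ I) ((idealOfVars σ k).map (Ideal.Quotient.mk I)) j =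
      formCodim ((idealOfVars σ k ^ (j + 1) ⊔ I).restrictScalars k) j := by
  rw [HF, ← Ideal.map_pow, ← Ideal.map_pow]
  let mk : MvPolynomial σ k →ₗ[k] MvPolynomial σ k ⧸ I := (Ideal.Quotient.mkₐ k I).toLinearMap
  let N (i : ℕ) : Submodule k (MvPolynomial σ k ⧸ I) :=
    ((idealOfVars σ k ^ i).map (Ideal.Quotient.mk I)).restrictScalars k
  have hker : LinearMap.ker ((N (j + 1)).mkQ ∘ₗ mk) =
      (idealOfVars σ k ^ (j + 1) ⊔ I).restrictScalars k := by
    rw [LinearMap.ker_comp, Submodule.ker_mkQ]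
    exact Submodule.ext fun f => Ideal.mem_quotient_iff_mem_sup
  have hN : N j = ((idealOfVars σ k ^ j).restrictScalars k).map mk :=
    Submodule.ext fun f => Ideal.mem_map_iff_of_surjective _ Ideal.Quotient.mk_surjective
  have hvanish :
      ((idealOfVars σ k ^ (j + 1)).restrictScalars k).map ((N (j + 1)).mkQ ∘ₗ mk) = ⊥ := by
    rw [← le_bot_iff, Submodule.map_le_iff_le_comap, Submodule.comap_bot, hker]
    exact le_sup_left (α := Ideal (MvPolynomial σ k))
  change finrank k ((N j).map (N (j + 1)).mkQ) = _
  rw [hN, ← Submodule.map_comp, restrictScalars_pow_idealOfVars_eq_sup, Submodule.map_sup, hvanish,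
    sup_bot_eq, finrank_map_eq_finrank_quotient_submoduleOf, hker, formCodim]

theorem isMaximal_map_mk_idealOfVars (hI : I ≤ idealOfVars σ k) :
    ((idealOfVars σ k).map (Ideal.Quotient.mk I)).IsMaximal :=
  have := isMaximal_idealOfVars σ k
  Ideal.IsMaximal.map_of_surjective_of_ker_le Ideal.Quotient.mk_surjective
    (Ideal.mk_ker.trans_le hI)

theorem algebraMap_quotient_map_mk_idealOfVars_surjective (I : Ideal (MvPolynomial σ k)) :
    Function.Surjective (algebraMap k
      ((MvPolynomial σ k ⧸ I) ⧸ (idealOfVars σ k).map (Ideal.Quotient.mk I))) := by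
  intro x
  obtain ⟨a, rfl⟩ := Ideal.Quotient.mk_surjective x
  obtain ⟨f, rfl⟩ := Ideal.Quotient.mk_surjective a
  refine ⟨constantCoeff f, (Ideal.Quotient.eq.2 (Ideal.mem_map_of_mem _ ?_)).symm⟩
  rw [← ker_constantCoeff_eq_idealOfVars, RingHom.mem_ker, map_sub]
  exact sub_eq_zero.2 (constantCoeff_C _ _).symm

theorem colon_bot_map_mk_idealOfVars_le {s : ℕ}
    (hI : I.colon (idealOfVars σ k : Set (MvPolynomial σ k)) ≤ idealOfVars σ k ^ s ⊔ I) :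
    (⊥ : Ideal (MvPolynomial σ k ⧸ I)).colon ((idealOfVars σ k).map (Ideal.Quotient.mk I)) ≤
      (idealOfVars σ k).map (Ideal.Quotient.mk I) ^ s := by
  intro a ha
  obtain ⟨f, rfl⟩ := Ideal.Quotient.mk_surjective a
  rw [← Ideal.map_pow, Ideal.mem_quotient_iff_mem_sup]
  refine hI (Submodule.mem_colon.2 fun g hg => ?_)
  have := Submodule.mem_colon.1 ha _ (Ideal.mem_map_of_mem (Ideal.Quotient.mk I) hg)
  rwa [smul_eq_mul, ← map_mul, Submodule.mem_bot, Ideal.Quotient.eq_zero_iff_mem] at this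

theorem exists_artinianLevelLocalAlgebra_HF_eq_formCodim [Finite σ] {s τ : ℕ}
    (hI : I ≤ idealOfVars σ k) (hs : idealOfVars σ k ^ (s + 1) ≤ I)
    (hcolon : I.colon (idealOfVars σ k : Set (MvPolynomial σ k)) ≤ idealOfVars σ k ^ s ⊔ I)
    (hτ : formCodim (I.restrictScalars k) s = τ) (hpos : 0 < τ) :
    ∃ B : ArtinianLevelLocalAlgebra k s τ, ∀ j,
      HF k B.carrier (IsLocalRing.maximalIdeal B.carrier) j =
        formCodim ((idealOfVars σ k ^ (j + 1) ⊔ I).restrictScalars k) j := by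
  simp only [← HF_quotient_eq_formCodim]
  have hHF : HF k _ ((idealOfVars σ k).map (Ideal.Quotient.mk I)) s = τ := by
    rw [HF_quotient_eq_formCodim, sup_eq_right.2 hs, hτ]
  subst hHF
  refine exists_artinianLevelLocalAlgebra_HF_eq (isMaximal_map_mk_idealOfVars hI)
    (algebraMap_quotient_map_mk_idealOfVars_surjective I)
    (isLevelOfType_of_colon_le ?_ (colon_bot_map_mk_idealOfVars_le hcolon) hpos)
  rwa [← Ideal.map_pow, Ideal.map_eq_bot_iff_le_ker, Ideal.mk_ker]

theorem formCodim_pow_idealOfVars_sup_of_le {j : ℕ} (hI : I ≤ idealOfVars σ k ^ (j + 1)) :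
    formCodim ((idealOfVars σ k ^ (j + 1) ⊔ I).restrictScalars k) j =
      finrank k (homogeneousSubmodule σ k j) := by
  rw [sup_eq_left.2 hI, ← formCodim_bot]
  refine formCodim_congr fun f hf => ⟨fun hfI => ?_, fun hf0 => hf0 ▸ zero_mem _⟩
  rw [Submodule.mem_bot, ← homogeneousComponent_eq_self hf]
  exact mem_pow_idealOfVars_iff_homogeneousComponent.1 hfI j j.lt_succ_self

end HilbertFunction

section LevelIdeal

variable {σ k : Type*} [Field k]

/-- The cubic part of a polynomial, corrected by the multiple of the cubic form `s` that a
functional `q` on quadratic forms assigns to the quadratic part. -/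
noncomputable def correctedCubicPart (q : Dual k (MvPolynomial σ k)) (s : MvPolynomial σ k) :
    MvPolynomial σ k →ₗ[k] MvPolynomial σ k :=
  homogeneousComponent 3 + (q ∘ₗ homogeneousComponent 2).smulRight s

/-- The largest ideal of polynomials whose corrected cubic part lies in `K`. For `q = 0` it is a
homogeneous ideal. -/
noncomputable def levelIdeal (K : Submodule k (MvPolynomial σ k)) (q : Dual k (MvPolynomial σ k))
    (s : MvPolynomial σ k) : Ideal (MvPolynomial σ k) where
  carrier := {f | ∀ g, correctedCubicPart q s (f * g) ∈ K}
  add_mem' hf hf' g := by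
    rw [add_mul, map_add]
    exact add_mem (hf g) (hf' g)
  zero_mem' g := by
    rw [zero_mul, map_zero]
    exact zero_mem K
  smul_mem' c f hf g := by
    rw [smul_eq_mul, mul_comm c f, mul_assoc]
    exact hf (c * g)

/-- The data for which `levelIdeal K q s` defines a level algebra: `s` is a cubic form outside `K`
and `q` induces a nondegenerate bilinear form on the linear forms that multiply all quadratic
forms into `K`. -/
structure IsLevelDatum (K : Submodule k (MvPolynomial σ k)) (q : Dual k (MvPolynomial σ k))
    (s : MvPolynomial σ k) : Prop where
  mem : s ∈ homogeneousSubmodule σ k 3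
  notMem : s ∉ K
  nondegenerate : ∀ f ∈ homogeneousSubmodule σ k 1 ⊓ K / homogeneousSubmodule σ k 2,
    (∀ g ∈ homogeneousSubmodule σ k 1 ⊓ K / homogeneousSubmodule σ k 2, q (f * g) = 0) → f = 0

variable {K : Submodule k (MvPolynomial σ k)} {q : Dual k (MvPolynomial σ k)}
  {s f g : MvPolynomial σ k}

theorem correctedCubicPart_apply (q : Dual k (MvPolynomial σ k)) (s f : MvPolynomial σ k) :
    correctedCubicPart q s f = homogeneousComponent 3 f + q (homogeneousComponent 2 f) • s :=
  rfl

theorem correctedCubicPart_mul_of_mem_one (hg : g ∈ homogeneousSubmodule σ k 1) :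
    correctedCubicPart q s (f * g) =
      homogeneousComponent 2 f * g + q (homogeneousComponent 1 f * g) • s := by
  rw [correctedCubicPart_apply, homogeneousComponent_mul_of_mem_homogeneousSubmodule (d := 2) hg,
    homogeneousComponent_mul_of_mem_homogeneousSubmodule (d := 1) hg]

theorem correctedCubicPart_mul_of_mem_two (hg : g ∈ homogeneousSubmodule σ k 2) :
    correctedCubicPart q s (f * g) =
      homogeneousComponent 1 f * g + q (homogeneousComponent 0 f * g) • s := by
  rw [correctedCubicPart_apply, homogeneousComponent_mul_of_mem_homogeneousSubmodule (d := 1) hg,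
    homogeneousComponent_mul_of_mem_homogeneousSubmodule (d := 0) hg]

theorem correctedCubicPart_mul_of_mem_three (hg : g ∈ homogeneousSubmodule σ k 3) :
    correctedCubicPart q s (f * g) = homogeneousComponent 0 f * g := by
  rw [correctedCubicPart_apply, homogeneousComponent_mul_of_mem_homogeneousSubmodule (d := 0) hg,
    homogeneousComponent_mul_eq_zero_of_mem_homogeneousSubmodule (by lia) hg, map_zero, zero_smul,
    add_zero]

theorem correctedCubicPart_eq_zero_of_mem_pow_idealOfVars (hf : f ∈ idealOfVars σ k ^ 4) :
    correctedCubicPart q s f = 0 := by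
  rw [mem_pow_idealOfVars_iff_homogeneousComponent] at hf
  rw [correctedCubicPart_apply, hf 3 (by lia), hf 2 (by lia), map_zero, zero_smul, add_zero]

theorem correctedCubicPart_mem_of_mem_levelIdeal (hf : f ∈ levelIdeal K q s) :
    correctedCubicPart q s f ∈ K :=
  mul_one f ▸ hf 1

theorem mem_levelIdeal_of_mem_pow_idealOfVars_two (hf : f ∈ idealOfVars σ k ^ 2)
    (hfK : homogeneousComponent 2 f ∈ K / homogeneousSubmodule σ k 1)
    (hcubic : correctedCubicPart q s f ∈ K) : f ∈ levelIdeal K q s := by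
  intro g
  rw [mem_pow_idealOfVars_iff_homogeneousComponent] at hf
  rw [← sum_homogeneousComponent g, Finset.mul_sum, map_sum]
  refine Submodule.sum_mem _ fun i _ => ?_
  have hg := homogeneousComponent_mem i g
  match i, hg with
  | 0, _ =>
    rw [homogeneousComponent_zero, mul_comm, ← smul_eq_C_mul, map_smul]
    exact K.smul_mem _ hcubic
  | 1, hg =>
    rw [correctedCubicPart_mul_of_mem_one hg, hf 1 one_lt_two, zero_mul, map_zero, zero_smul,
      add_zero]
    exact Submodule.mem_div_iff_forall_mul_mem.1 hfK _ hg
  | 2, hg =>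
    simp [correctedCubicPart_mul_of_mem_two hg, hf 0 two_pos, hf 1 one_lt_two]
  | 3, hg =>
    simp [correctedCubicPart_mul_of_mem_three hg, hf 0 two_pos]
  | i + 4, hg =>
    have hfg : f * homogeneousComponent (i + 4) g ∈ idealOfVars σ k ^ 4 :=
      Ideal.mul_mem_left _ _ (Ideal.pow_le_pow_right (by lia)
        (mem_pow_idealOfVars_of_mem_homogeneousSubmodule hg))
    exact correctedCubicPart_eq_zero_of_mem_pow_idealOfVars hfg ▸ zero_mem K

theorem pow_idealOfVars_four_le_levelIdeal : idealOfVars σ k ^ 4 ≤ levelIdeal K q s := by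
  intro f hf
  refine mem_levelIdeal_of_mem_pow_idealOfVars_two (Ideal.pow_le_pow_right (by lia) hf) ?_ ?_
  · rw [mem_pow_idealOfVars_iff_homogeneousComponent.1 hf 2 (by lia)]
    exact zero_mem _
  · rw [correctedCubicPart_eq_zero_of_mem_pow_idealOfVars hf]
    exact zero_mem K

theorem mem_levelIdeal_iff_of_mem_homogeneousSubmodule_three
    (hf : f ∈ homogeneousSubmodule σ k 3) : f ∈ levelIdeal K q s ↔ f ∈ K := by
  have hf2 : homogeneousComponent 2 f = 0 := by rw [homogeneousComponent_of_mem hf, if_neg (by lia)]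
  have hcubic : correctedCubicPart q s f = f := by
    rw [correctedCubicPart_apply, hf2, map_zero, zero_smul, add_zero,
      homogeneousComponent_eq_self hf]
  refine ⟨fun h => hcubic ▸ correctedCubicPart_mem_of_mem_levelIdeal h, fun hfK =>
    mem_levelIdeal_of_mem_pow_idealOfVars_two ?_ (hf2 ▸ zero_mem _) (hcubic.symm ▸ hfK)⟩
  exact Ideal.pow_le_pow_right (by lia) (mem_pow_idealOfVars_of_mem_homogeneousSubmodule hf)

theorem correctedCubicPart_mul_mem_of_mem_colon
    (hf : f ∈ (levelIdeal K q s).colon (idealOfVars σ k : Set (MvPolynomial σ k)))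
    {e : ℕ} (he : e ≠ 0) (hg : g ∈ homogeneousSubmodule σ k e) :
    correctedCubicPart q s (f * g) ∈ K :=
  correctedCubicPart_mem_of_mem_levelIdeal <| Submodule.mem_colon.1 hf g <|
    Ideal.pow_le_self he (mem_pow_idealOfVars_of_mem_homogeneousSubmodule hg)

namespace IsLevelDatum

theorem eq_zero_of_smul_mem (h : IsLevelDatum K q s) {c : k} (hc : c • s ∈ K) : c = 0 := by
  by_contra hc0
  exact h.notMem ((K.smul_mem_iff hc0).1 hc)

theorem sub_smul_mem_levelIdeal (h : IsLevelDatum K q s) (hf : f ∈ homogeneousSubmodule σ k 2)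
    (hfK : f ∈ K / homogeneousSubmodule σ k 1) : f - q f • s ∈ levelIdeal K q s := by
  have hcomp (d : ℕ) : homogeneousComponent d (f - q f • s) =
      (if d = 2 then f else 0) - q f • if d = 3 then s else 0 := by
    rw [map_sub, map_smul, homogeneousComponent_of_mem hf, homogeneousComponent_of_mem h.mem]
  refine mem_levelIdeal_of_mem_pow_idealOfVars_two ?_ ?_ ?_
  · refine mem_pow_idealOfVars_iff_homogeneousComponent.2 fun d hd => ?_
    rw [hcomp, if_neg (by lia), if_neg (by lia), smul_zero, sub_zero]
  · simpa [hcomp] using hfK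
  · simp [correctedCubicPart_apply, hcomp]

theorem homogeneousComponent_zero_eq_zero (h : IsLevelDatum K q s)
    (hf : f ∈ (levelIdeal K q s).colon (idealOfVars σ k : Set (MvPolynomial σ k))) :
    homogeneousComponent 0 f = 0 := by
  have hs := correctedCubicPart_mul_mem_of_mem_colon hf three_ne_zero h.mem
  rw [correctedCubicPart_mul_of_mem_three h.mem, homogeneousComponent_zero, ← smul_eq_C_mul] at hs
  rw [homogeneousComponent_zero, h.eq_zero_of_smul_mem hs, C_0]

theorem homogeneousComponent_one_mem_div (h : IsLevelDatum K q s)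
    (hf : f ∈ (levelIdeal K q s).colon (idealOfVars σ k : Set (MvPolynomial σ k))) :
    homogeneousComponent 1 f ∈ K / homogeneousSubmodule σ k 2 := by
  refine Submodule.mem_div_iff_forall_mul_mem.2 fun g hg => ?_
  have hfg := correctedCubicPart_mul_mem_of_mem_colon hf two_ne_zero hg
  rwa [correctedCubicPart_mul_of_mem_two hg, h.homogeneousComponent_zero_eq_zero hf, zero_mul,
    map_zero, zero_smul, add_zero] at hfg

theorem homogeneousComponent_one_eq_zero (h : IsLevelDatum K q s)
    (hf : f ∈ (levelIdeal K q s).colon (idealOfVars σ k : Set (MvPolynomial σ k))) :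
    homogeneousComponent 1 f = 0 := by
  refine h.nondegenerate _
    ⟨homogeneousComponent_mem 1 f, h.homogeneousComponent_one_mem_div hf⟩ ?_
  rintro g ⟨hg, hgK⟩
  have hfg := correctedCubicPart_mul_mem_of_mem_colon hf one_ne_zero hg
  have hfgK : homogeneousComponent 2 f * g ∈ K := mul_comm g _ ▸
    Submodule.mem_div_iff_forall_mul_mem.1 hgK _ (homogeneousComponent_mem 2 f)
  rw [correctedCubicPart_mul_of_mem_one hg, K.add_mem_iff_right hfgK] at hfg
  exact h.eq_zero_of_smul_mem hfg

theorem homogeneousComponent_two_mem_div (h : IsLevelDatum K q s)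
    (hf : f ∈ (levelIdeal K q s).colon (idealOfVars σ k : Set (MvPolynomial σ k))) :
    homogeneousComponent 2 f ∈ K / homogeneousSubmodule σ k 1 := by
  refine Submodule.mem_div_iff_forall_mul_mem.2 fun g hg => ?_
  have hfg := correctedCubicPart_mul_mem_of_mem_colon hf one_ne_zero hg
  rwa [correctedCubicPart_mul_of_mem_one hg, h.homogeneousComponent_one_eq_zero hf, zero_mul,
    map_zero, zero_smul, add_zero] at hfg

theorem mem_pow_idealOfVars_two (h : IsLevelDatum K q s)
    (hf : f ∈ (levelIdeal K q s).colon (idealOfVars σ k : Set (MvPolynomial σ k))) :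
    f ∈ idealOfVars σ k ^ 2 := by
  refine mem_pow_idealOfVars_iff_homogeneousComponent.2 fun d hd => ?_
  interval_cases d
  exacts [h.homogeneousComponent_zero_eq_zero hf, h.homogeneousComponent_one_eq_zero hf]

theorem mem_pow_idealOfVars_three_sup_levelIdeal (h : IsLevelDatum K q s)
    (hf : f ∈ (levelIdeal K q s).colon (idealOfVars σ k : Set (MvPolynomial σ k))) :
    f ∈ idealOfVars σ k ^ 3 ⊔ levelIdeal K q s := by
  have hcorrected := h.sub_smul_mem_levelIdeal (homogeneousComponent_mem 2 f)
    (h.homogeneousComponent_two_mem_div hf)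
  have hrest : f - homogeneousComponent 2 f + q (homogeneousComponent 2 f) • s ∈
      idealOfVars σ k ^ 3 :=
    add_mem (sub_homogeneousComponent_mem_pow_idealOfVars (h.mem_pow_idealOfVars_two hf))
      (Submodule.smul_of_tower_mem _ _ (mem_pow_idealOfVars_of_mem_homogeneousSubmodule h.mem))
  convert Submodule.add_mem_sup hrest hcorrected using 1
  ring

theorem levelIdeal_le_pow_idealOfVars_two (h : IsLevelDatum K q s) :
    levelIdeal K q s ≤ idealOfVars σ k ^ 2 :=
  fun _ hf => h.mem_pow_idealOfVars_two (Ideal.le_colon hf)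

theorem mem_pow_idealOfVars_three_sup_levelIdeal_iff (h : IsLevelDatum K q s)
    (hf : f ∈ homogeneousSubmodule σ k 2) :
    f ∈ idealOfVars σ k ^ 3 ⊔ levelIdeal K q s ↔ f ∈ K / homogeneousSubmodule σ k 1 := by
  refine ⟨fun hfI => ?_, fun hfK => ?_⟩
  · obtain ⟨u, hu, v, hv, rfl⟩ := Submodule.mem_sup.1 hfI
    have hv2 : homogeneousComponent 2 v = u + v := by
      rw [← homogeneousComponent_eq_self hf, map_add,
        mem_pow_idealOfVars_iff_homogeneousComponent.1 hu 2 (by lia), zero_add]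
    exact hv2 ▸ h.homogeneousComponent_two_mem_div (Ideal.le_colon hv)
  · rw [← add_sub_cancel (q f • s) f]
    exact Submodule.add_mem_sup
      (Submodule.smul_of_tower_mem _ _ (mem_pow_idealOfVars_of_mem_homogeneousSubmodule h.mem))
      (h.sub_smul_mem_levelIdeal hf hfK)

theorem exists_artinianLevelLocalAlgebra {σ k : Type} [Fintype σ] [Field k]
    {K : Submodule k (MvPolynomial σ k)} {q : Dual k (MvPolynomial σ k)} {s : MvPolynomial σ k}
    (h : IsLevelDatum K q s) :
    ∃ B : ArtinianLevelLocalAlgebra k 3 (formCodim K 3), ∀ j,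
      HF k B.carrier (IsLocalRing.maximalIdeal B.carrier) j =
        hVec 1 (Fintype.card σ) (formCodim (K / homogeneousSubmodule σ k 1) 2) (formCodim K 3)
          j := by
  have hI2 := h.levelIdeal_le_pow_idealOfVars_two
  have hI1 := hI2.trans (Ideal.pow_le_self two_ne_zero)
  have hI4 : idealOfVars σ k ^ 4 ≤ levelIdeal K q s := pow_idealOfVars_four_le_levelIdeal
  have hcubic : formCodim ((levelIdeal K q s).restrictScalars k) 3 = formCodim K 3 :=
    formCodim_congr fun _ => mem_levelIdeal_iff_of_mem_homogeneousSubmodule_three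
  have hpos : formCodim K 3 ≠ 0 := fun h0 => h.notMem (formCodim_eq_zero_iff.1 h0 h.mem)
  obtain ⟨B, hB⟩ := exists_artinianLevelLocalAlgebra_HF_eq_formCodim hI1 hI4
    (fun _ => h.mem_pow_idealOfVars_three_sup_levelIdeal) hcubic (Nat.pos_of_ne_zero hpos)
  refine ⟨B, fun j => (hB j).trans ?_⟩
  match j with
  | 0 => rw [formCodim_pow_idealOfVars_sup_of_le (by simpa using hI1),
      finrank_homogeneousSubmodule_zero, hVec, if_pos rfl]
  | 1 => exact (formCodim_pow_idealOfVars_sup_of_le hI2).trans finrank_homogeneousSubmodule_one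
  | 2 => exact formCodim_congr fun _ => h.mem_pow_idealOfVars_three_sup_levelIdeal_iff
  | 3 => rw [sup_eq_right.2 hI4, hcubic]; rfl
  | j + 4 =>
    refine formCodim_eq_zero_iff.2 fun f hf => Ideal.mem_sup_right (hI4 ?_)
    exact Ideal.pow_le_pow_right (by lia) (mem_pow_idealOfVars_of_mem_homogeneousSubmodule hf)

end IsLevelDatum

end LevelIdeal

theorem h_vector_three_level_nonunimodal_general (k : Type) [Field k] (m n τ : ℕ)
    (hO : IsOSequence k (hVec 1 m n τ)) (hτ : 0 < τ) (h : n ≤ τ) :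
    ∃ B : ArtinianLevelLocalAlgebra k 3 τ,
      ∀ j, HF k B.carrier (IsLocalRing.maximalIdeal B.carrier) j = hVec 1 m n τ j := by
  obtain ⟨m', J', -, hJ'⟩ := hO
  obtain ⟨J, hJ⟩ := exists_gradedDim_eq_of_gradedDim_one_eq (m := m) (hJ' 1)
  have hn : formCodim (J.restrictScalars k) 2 = n := by
    rw [← gradedDim_eq_formCodim, hJ, hJ']; rfl
  have hτJ : formCodim (J.restrictScalars k) 3 = τ := by
    rw [← gradedDim_eq_formCodim, hJ, hJ']; rfl
  obtain ⟨K, hK2, hK3⟩ := exists_formCodim_div_eq J (by rwa [hn, hτJ])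
  rw [hn] at hK2
  rw [hτJ] at hK3
  obtain ⟨s, hs, hsK⟩ := SetLike.not_le_iff_exists.1
    (formCodim_eq_zero_iff.not.1 (hK3.trans_ne hτ.ne'))
  obtain ⟨q, hq⟩ := exists_dual_nondegenerate_on_linearForms (N :=
    homogeneousSubmodule (Fin m) k 1 ⊓ K / homogeneousSubmodule (Fin m) k 2) inf_le_left
  subst hK2 hK3
  simpa only [Fintype.card_fin] using
    IsLevelDatum.exists_artinianLevelLocalAlgebra ⟨hs, hsK, hq⟩

/-- **Proposition.** Let `H = (1, m, n, τ)` be an h-vector with `n < τ`. Then `H` is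
the h-vector of an Artinian `3`-level local `k`-algebra. -/
theorem h_vector_three_level_nonunimodal
    (k : Type) [Field k] [IsAlgClosed k] [CharZero k] (m n τ : ℕ)
    (hO : IsOSequence k (hVec 1 m n τ))
    (h : n < τ) :
    ∃ B : ArtinianLevelLocalAlgebra k 3 τ,
      ∀ j, HF k B.carrier (IsLocalRing.maximalIdeal B.carrier) j = hVec 1 m n τ j :=
  h_vector_three_level_nonunimodal_general k m n τ hO (by lia) h.le
end
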